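/- arXiv:2103.07698 — 2 statements merged into one kernel-verified Lean document; each statement's English description precedes it below -/
import Mathlib

section
/- For every τ in the complex upper half plane, E_{3,4}(τ) = −54·E_{1,−3}(τ)·(E_{3,−3,1}(τ) + 3·E_{3,1,−3}(τ)); equivalently, E_{3,4}/E_{3,2}^{1/2} = −9(E_{3,−3,1} + 3E_{3,1,−3}), since E_{3,2}^{1/2} = 6E_{1,−3}. -/
open Complex

/-- `q = exp(2πiτ)`. -/
noncomputable def qq (τ : ℂ) : ℂ := Complex.exp (2 * Real.pi * Complex.I * τ)

/-- `σ_k(n) = Σ_{d ∣ n} d^k`, as a complex number. -/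
noncomputable def sigmaC (k n : ℕ) : ℂ := ∑ d ∈ n.divisors, (d : ℂ) ^ k

/-- Eisenstein series `E₂(τ) = 1 - 24 Σ_{n≥1} σ₁(n) qⁿ`. -/
noncomputable def E₂ (τ : ℂ) : ℂ := 1 - 24 * ∑' n : ℕ, sigmaC 1 (n + 1) * qq τ ^ (n + 1)

/-- Eisenstein series `E₄(τ) = 1 + 240 Σ_{n≥1} σ₃(n) qⁿ`. -/
noncomputable def E₄ (τ : ℂ) : ℂ := 1 + 240 * ∑' n : ℕ, sigmaC 3 (n + 1) * qq τ ^ (n + 1)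

/-- Eisenstein series `E₆(τ) = 1 - 504 Σ_{n≥1} σ₅(n) qⁿ`. -/
noncomputable def E₆ (τ : ℂ) : ℂ := 1 - 504 * ∑' n : ℕ, sigmaC 5 (n + 1) * qq τ ^ (n + 1)

/-- Dedekind eta function `η(τ) = exp(πiτ/12) ∏_{n≥1} (1 - qⁿ)`. -/
noncomputable def η (τ : ℂ) : ℂ :=
  Complex.exp (Real.pi * Complex.I * τ / 12) * ∏' n : ℕ, (1 - qq τ ^ (n + 1))

/-- Theta function `θ(τ) = Σ_{n ∈ ℤ} q^{n²}`. -/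
noncomputable def θ (τ : ℂ) : ℂ := ∑' n : ℤ, qq τ ^ (n ^ 2)

/-- The character `χ₋₄`: `χ₋₄(d) = 1, -1, 0` according as `d ≡ 1, 3, 0/2 (mod 4)`. -/
noncomputable def χ₄ (d : ℕ) : ℂ := if d % 4 = 1 then 1 else if d % 4 = 3 then -1 else 0

/-- The character `χ₋₃`: `χ₋₃(d) = 1, -1, 0` according as `d ≡ 1, 2, 0 (mod 3)`. -/
noncomputable def χ₃ (d : ℕ) : ℂ := if d % 3 = 1 then 1 else if d % 3 = 2 then -1 else 0

/-- `E_{1,-4}(τ) = 1/4 + Σ_{n≥1} (Σ_{d∣n} χ₋₄(d)) qⁿ`. -/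
noncomputable def E₁₄ (τ : ℂ) : ℂ :=
  1 / 4 + ∑' n : ℕ, (∑ d ∈ (n + 1).divisors, χ₄ d) * qq τ ^ (n + 1)

/-- `E_{1,-3}(τ) = 1/6 + Σ_{n≥1} (Σ_{d∣n} χ₋₃(d)) qⁿ`. -/
noncomputable def E₁₃ (τ : ℂ) : ℂ :=
  1 / 6 + ∑' n : ℕ, (∑ d ∈ (n + 1).divisors, χ₃ d) * qq τ ^ (n + 1)

/-- `E_{2,2}(τ) = 2E₂(2τ) - E₂(τ)`. -/
noncomputable def E₂₂ (τ : ℂ) : ℂ := 2 * E₂ (2 * τ) - E₂ τ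

/-- `E_{2,4}(τ) = (4E₄(2τ) - E₄(τ))/3`. -/
noncomputable def E₂₄ (τ : ℂ) : ℂ := (4 * E₄ (2 * τ) - E₄ τ) / 3

/-- `E_{3,2}(τ) = (3E₂(3τ) - E₂(τ))/2`. -/
noncomputable def E₃₂ (τ : ℂ) : ℂ := (3 * E₂ (3 * τ) - E₂ τ) / 2

/-- `E_{3,4}(τ) = (9E₄(3τ) - E₄(τ))/8`. -/
noncomputable def E₃₄ (τ : ℂ) : ℂ := (9 * E₄ (3 * τ) - E₄ τ) / 8

/-- `E_{4,2}(τ) = (4E₂(4τ) - E₂(τ))/3`. -/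
noncomputable def E₄₂ (τ : ℂ) : ℂ := (4 * E₂ (4 * τ) - E₂ τ) / 3

/-- `E'_{4,2}(τ) = 4E₂(4τ) - 4E₂(2τ) + E₂(τ)`. -/
noncomputable def E₄₂' (τ : ℂ) : ℂ := 4 * E₂ (4 * τ) - 4 * E₂ (2 * τ) + E₂ τ

/-- `f_{1,j}(τ) = 2E₂(τ) - ((3+(-1)ʲi√3)/6)E₂(τ/2) - ((3-(-1)ʲi√3)/6)E₂((τ+1)/2)`. -/
noncomputable def f₁ (j : ℕ) (τ : ℂ) : ℂ :=
  2 * E₂ τ - ((3 + (-1 : ℂ) ^ j * Complex.I * Real.sqrt 3) / 6) * E₂ (τ / 2)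
    - ((3 - (-1 : ℂ) ^ j * Complex.I * Real.sqrt 3) / 6) * E₂ ((τ + 1) / 2)

/-- `g_{1,j}(τ) = (3/2)E₂(τ) - (1/4) Σ_{0≤m≤2, m≢j (mod 3)} E₂((τ+m)/3)`. -/
noncomputable def g₁ (j : ℕ) (τ : ℂ) : ℂ :=
  (3 / 2) * E₂ τ -
    (1 / 4) * ∑ m ∈ (Finset.range 3).filter (fun m => ¬ m % 3 = j % 3), E₂ ((τ + m) / 3)

/-- `f_{2,j}(τ) = 4E_{1,-4}(τ) + (-1)ʲ·2i·(E_{1,-4}(τ/2) - E_{1,-4}((τ+1)/2))`. -/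
noncomputable def f₂ (j : ℕ) (τ : ℂ) : ℂ :=
  4 * E₁₄ τ + (-1 : ℂ) ^ j * 2 * Complex.I * (E₁₄ (τ / 2) - E₁₄ ((τ + 1) / 2))

/-- `f_{3,j}(τ) = 6E_{1,-3}(2τ) + (-1)ʲ·i√3·(E_{1,-3}(τ/2) - E_{1,-3}((τ+1)/2))`. -/
noncomputable def f₃ (j : ℕ) (τ : ℂ) : ℂ :=
  6 * E₁₃ (2 * τ) +
    (-1 : ℂ) ^ j * Complex.I * Real.sqrt 3 * (E₁₃ (τ / 2) - E₁₃ ((τ + 1) / 2))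

/-- `f_{4,j}(τ) = θ(τ/2 - (-1)ʲ/4)`. -/
noncomputable def f₄ (j : ℕ) (τ : ℂ) : ℂ := θ (τ / 2 - (-1 : ℂ) ^ j / 4)

/-- `g_{4,j}(τ) = 2θ(2τ)² - θ((τ+j)/2)²`. -/
noncomputable def g₄ (j : ℕ) (τ : ℂ) : ℂ := 2 * θ (2 * τ) ^ 2 - θ ((τ + j) / 2) ^ 2

/-- `E_{3,-3,1}(τ) = -1/9 + Σ_{n≥1} (Σ_{d∣n} d²χ₋₃(d)) qⁿ`. -/
noncomputable def E₃₃₁ (τ : ℂ) : ℂ :=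
  -(1 / 9) + ∑' n : ℕ, (∑ d ∈ (n + 1).divisors, (d : ℂ) ^ 2 * χ₃ d) * qq τ ^ (n + 1)

/-- `E_{3,1,-3}(τ) = Σ_{n≥1} (Σ_{d∣n} d²χ₋₃(n/d)) qⁿ`. -/
noncomputable def E₃₁₃ (τ : ℂ) : ℂ :=
  ∑' n : ℕ, (∑ d ∈ (n + 1).divisors, (d : ℂ) ^ 2 * χ₃ ((n + 1) / d)) * qq τ ^ (n + 1)

/-! Liouville's method evaluates sums of `F(a, b, x, y)` over `a x + b y = n`: the shear
`(a, b, x, y) ↦ (a + b, b, x, y - x)` preserves `a x + b y`, so a summand `H - H ∘ shear` only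
contributes through the diagonals `a = b` and `x = y`, that is, through a sum over the divisors of
`n`. By the parallelogram law, one potential `H` depending on residues modulo `3` produces
`χ₋₃(a) χ₋₃(b) (x² + y²)`, and another one `χ₋₃(a) χ₋₃(b) (a² + b²)`. Read as identities between
`q`-coefficients, the two evaluations express `E_{1,-3} E_{3,1,-3}` and `E_{1,-3} E_{3,-3,1}` as
linear combinations of `E₄(τ)` and `E₄(3τ)`, and `E_{3,4}` is a combination of these products. -/

section DivisorSum

variable {M : Type*}

/-- The divisor sum `∑ φ(d, m)` over the factorizations `d m = n`. -/
def divisorSum [AddCommMonoid M] (φ : ℕ → ℕ → M) (n : ℕ) : M :=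
  ∑ d ∈ n.divisors, φ d (n / d)

lemma divisorSum_zero [AddCommMonoid M] (φ : ℕ → ℕ → M) : divisorSum φ 0 = 0 := by
  simp only [divisorSum, Nat.divisors_zero, Finset.sum_empty]

lemma divisorSum_eq_sum_divisorsAntidiagonal [AddCommMonoid M] (φ : ℕ → ℕ → M) (n : ℕ) :
    divisorSum φ n = ∑ p ∈ n.divisorsAntidiagonal, φ p.1 p.2 :=
  (Nat.sum_divisorsAntidiagonal φ).symm

lemma divisorSum_swap [AddCommMonoid M] (φ : ℕ → ℕ → M) (n : ℕ) :
    divisorSum (fun d m => φ m d) n = divisorSum φ n := by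
  rw [divisorSum, divisorSum_eq_sum_divisorsAntidiagonal, Nat.sum_divisorsAntidiagonal']

lemma divisorSum_congr [AddCommMonoid M] {φ ψ : ℕ → ℕ → M} (n : ℕ)
    (h : ∀ d m, 0 < d → 0 < m → φ d m = ψ d m) : divisorSum φ n = divisorSum ψ n :=
  Finset.sum_congr rfl fun _ hd => h _ _ (Nat.pos_of_mem_divisors hd)
    (Nat.div_pos (Nat.divisor_le hd) (Nat.pos_of_mem_divisors hd))

lemma divisorSum_sub [AddCommGroup M] (φ ψ : ℕ → ℕ → M) (n : ℕ) :
    divisorSum (fun d m => φ d m - ψ d m) n = divisorSum φ n - divisorSum ψ n :=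
  Finset.sum_sub_distrib _ _

lemma divisorSum_const_mul [NonUnitalNonAssocSemiring M] (c : M) (φ : ℕ → ℕ → M) (n : ℕ) :
    divisorSum (fun d m => c * φ d m) n = c * divisorSum φ n :=
  (Finset.mul_sum _ _ _).symm

lemma divisorSum_ite_dvd_mul [AddCommMonoid M] {k : ℕ} (hk : 0 < k) (φ : ℕ → ℕ → M) (n : ℕ) :
    divisorSum (fun d m => if k ∣ d then φ (d / k) m else 0) (k * n) = divisorSum φ n := by
  simp only [divisorSum, ← Finset.sum_filter]
  refine (Finset.sum_nbij' (k * ·) (· / k) ?_ ?_ ?_ ?_ ?_).symm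
  · intro d hd
    simp only [Finset.mem_filter, Nat.mem_divisors] at hd ⊢
    exact ⟨⟨Nat.mul_dvd_mul_left k hd.1, mul_ne_zero hk.ne' hd.2⟩, dvd_mul_right k d⟩
  · intro d hd
    simp only [Finset.mem_filter, Nat.mem_divisors] at hd ⊢
    obtain ⟨⟨hdn, hn⟩, d, rfl⟩ := hd
    rw [Nat.mul_div_cancel_left d hk]
    exact ⟨Nat.dvd_of_mul_dvd_mul_left hk hdn, right_ne_zero_of_mul hn⟩
  · exact fun d _ => Nat.mul_div_cancel_left d hk
  · exact fun d hd => Nat.mul_div_cancel' (Finset.mem_filter.1 hd).2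
  · intro d _
    rw [Nat.mul_div_cancel_left d hk, Nat.mul_div_mul_left n d hk]

lemma divisorSum_ite_dvd_eq_zero [AddCommMonoid M] {k n : ℕ} (hkn : ¬ k ∣ n) (φ : ℕ → ℕ → M) :
    divisorSum (fun d m => if k ∣ d then φ (d / k) m else 0) n = 0 :=
  Finset.sum_eq_zero fun _ hd =>
    if_neg fun hkd => hkn (hkd.trans (Nat.dvd_of_mem_divisors hd))

end DivisorSum

section BilinearSum

variable {M : Type*}

/-- The representations `n = a x + b y` by positive integers, encoded as `((a, x), (b, y))`. -/
def bilinearReps (n : ℕ) : Finset ((ℕ × ℕ) × ℕ × ℕ) :=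
  (Finset.HasAntidiagonal.antidiagonal n).biUnion fun ij =>
    ij.1.divisorsAntidiagonal ×ˢ ij.2.divisorsAntidiagonal

lemma mem_bilinearReps {n a b x y : ℕ} :
    ((a, x), (b, y)) ∈ bilinearReps n ↔
      (0 < a ∧ 0 < b ∧ 0 < x ∧ 0 < y) ∧ a * x + b * y = n := by
  simp only [bilinearReps, Finset.mem_biUnion, Finset.HasAntidiagonal.mem_antidiagonal,
    Finset.mem_product, Nat.mem_divisorsAntidiagonal, Prod.exists, ne_eq, Nat.pos_iff_ne_zero]
  constructor
  · rintro ⟨_, _, hn, ⟨rfl, hax⟩, rfl, hby⟩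
    simp only [mul_eq_zero, not_or] at hax hby
    exact ⟨⟨hax.1, hby.1, hax.2, hby.2⟩, hn⟩
  · rintro ⟨⟨ha, hb, hx, hy⟩, hn⟩
    exact ⟨_, _, hn, ⟨rfl, mul_ne_zero ha hx⟩, rfl, mul_ne_zero hb hy⟩

/-- The sum of `F(a, b, x, y)` over the representations `n = a x + b y` by positive integers. -/
def bilinearSum [AddCommMonoid M] (F : ℕ → ℕ → ℕ → ℕ → M) (n : ℕ) : M :=
  ∑ p ∈ bilinearReps n, F p.1.1 p.2.1 p.1.2 p.2.2

lemma sum_antidiagonal_divisorSum_mul [NonUnitalNonAssocSemiring M] (φ ψ : ℕ → ℕ → M)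
    (n : ℕ) :
    ∑ ij ∈ Finset.HasAntidiagonal.antidiagonal n, divisorSum φ ij.1 * divisorSum ψ ij.2 =
      bilinearSum (fun a b x y => φ a x * ψ b y) n := by
  rw [bilinearSum, bilinearReps, Finset.sum_biUnion]
  · simp only [divisorSum_eq_sum_divisorsAntidiagonal, Finset.sum_mul_sum, Finset.sum_product]
  · rintro ⟨i, j⟩ - ⟨i', j'⟩ - hne
    refine Finset.disjoint_left.2 fun p hp hp' => hne ?_
    simp only [Finset.mem_product, Nat.mem_divisorsAntidiagonal] at hp hp'
    rw [Prod.mk.injEq, ← hp.1.1, ← hp.2.1, ← hp'.1.1, ← hp'.2.1]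
    exact ⟨rfl, rfl⟩

lemma bilinearSum_congr [AddCommMonoid M] {F G : ℕ → ℕ → ℕ → ℕ → M} (n : ℕ)
    (h : ∀ a b x y, F a b x y = G a b x y) : bilinearSum F n = bilinearSum G n :=
  Finset.sum_congr rfl fun _ _ => h _ _ _ _

lemma bilinearSum_add [AddCommMonoid M] (F G : ℕ → ℕ → ℕ → ℕ → M) (n : ℕ) :
    bilinearSum (fun a b x y => F a b x y + G a b x y) n = bilinearSum F n + bilinearSum G n :=
  Finset.sum_add_distrib

lemma bilinearSum_sub [AddCommGroup M] (F G : ℕ → ℕ → ℕ → ℕ → M) (n : ℕ) :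
    bilinearSum (fun a b x y => F a b x y - G a b x y) n = bilinearSum F n - bilinearSum G n :=
  Finset.sum_sub_distrib _ _

lemma bilinearSum_const_mul [NonUnitalNonAssocSemiring M] (c : M) (F : ℕ → ℕ → ℕ → ℕ → M)
    (n : ℕ) : bilinearSum (fun a b x y => c * F a b x y) n = c * bilinearSum F n :=
  (Finset.mul_sum _ _ _).symm

lemma bilinearSum_swap [AddCommMonoid M] (F : ℕ → ℕ → ℕ → ℕ → M) (n : ℕ) :
    bilinearSum (fun a b x y => F b a y x) n = bilinearSum F n := by
  refine Finset.sum_nbij' Prod.swap Prod.swap ?_ ?_ (fun _ _ => rfl) (fun _ _ => rfl)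
    fun _ _ => rfl
  all_goals
    rintro ⟨⟨a, x⟩, b, y⟩ h
    simp only [Prod.swap_prod_mk, mem_bilinearReps] at h ⊢
    omega

lemma two_nsmul_bilinearSum [AddCommMonoid M] (F : ℕ → ℕ → ℕ → ℕ → M) (n : ℕ) :
    2 • bilinearSum F n = bilinearSum (fun a b x y => F a b x y + F b a y x) n := by
  rw [bilinearSum_add, bilinearSum_swap, two_nsmul]

lemma bilinearSum_transpose [AddCommMonoid M] (F : ℕ → ℕ → ℕ → ℕ → M) (n : ℕ) :
    bilinearSum (fun a b x y => F x y a b) n = bilinearSum F n := by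
  refine Finset.sum_nbij' (Prod.map Prod.swap Prod.swap) (Prod.map Prod.swap Prod.swap) ?_ ?_
    (fun _ _ => rfl) (fun _ _ => rfl) fun _ _ => rfl
  all_goals
    rintro ⟨⟨a, x⟩, b, y⟩ h
    simp only [Prod.map_apply, Prod.swap_prod_mk, mem_bilinearReps] at h ⊢
    rw [mul_comm x, mul_comm y]
    omega

lemma bilinearSum_shear [AddCommMonoid M] (F : ℕ → ℕ → ℕ → ℕ → M) (n : ℕ) :
    bilinearSum (fun a b x y => if x < y then F (a + b) b x (y - x) else 0) n =
      bilinearSum (fun a b x y => if b < a then F a b x y else 0) n := by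
  simp only [bilinearSum, ← Finset.sum_filter]
  refine Finset.sum_nbij' (fun p => ((p.1.1 + p.2.1, p.1.2), (p.2.1, p.2.2 - p.1.2)))
    (fun p => ((p.1.1 - p.2.1, p.1.2), (p.2.1, p.1.2 + p.2.2))) ?_ ?_ ?_ ?_ fun _ _ => rfl
  · rintro ⟨⟨a, x⟩, b, y⟩ h
    simp only [Finset.mem_filter, mem_bilinearReps] at h ⊢
    obtain ⟨⟨hpos, hn⟩, hxy⟩ := h
    obtain ⟨z, rfl⟩ := Nat.exists_eq_add_of_le hxy.le
    rw [Nat.add_sub_cancel_left]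
    exact ⟨⟨by omega, by linear_combination hn⟩, by omega⟩
  · rintro ⟨⟨a, x⟩, b, y⟩ h
    simp only [Finset.mem_filter, mem_bilinearReps] at h ⊢
    obtain ⟨⟨hpos, hn⟩, hba⟩ := h
    obtain ⟨c, rfl⟩ := Nat.exists_eq_add_of_le hba.le
    rw [Nat.add_sub_cancel_left]
    exact ⟨⟨by omega, by linear_combination hn⟩, by omega⟩
  all_goals
    rintro ⟨⟨a, x⟩, b, y⟩ h
    simp only [Finset.mem_filter, mem_bilinearReps, Prod.mk.injEq, true_and, and_true] at h ⊢
    omega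

lemma bilinearSum_ite_right_eq [AddCommMonoid M] (F : ℕ → ℕ → ℕ → ℕ → M) (n : ℕ) :
    bilinearSum (fun a b x y => if x = y then F a b x y else 0) n =
      divisorSum (fun d m => ∑ b ∈ Finset.Ico 1 d, F (d - b) b m m) n := by
  simp only [bilinearSum, ← Finset.sum_filter]
  rw [divisorSum_eq_sum_divisorsAntidiagonal, Finset.sum_sigma']
  refine Finset.sum_nbij' (fun p => ⟨(p.1.1 + p.2.1, p.2.2), p.2.1⟩)
    (fun s => ((s.1.1 - s.2, s.1.2), (s.2, s.1.2))) ?_ ?_ ?_ ?_ ?_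
  · rintro ⟨⟨a, x⟩, b, y⟩ h
    simp only [Finset.mem_filter, mem_bilinearReps, Finset.mem_sigma, Finset.mem_Ico,
      Nat.mem_divisorsAntidiagonal] at h ⊢
    obtain ⟨⟨⟨ha, hb, hx, -⟩, hn⟩, rfl⟩ := h
    have := Nat.mul_pos ha hx
    exact ⟨⟨by rw [← hn, add_mul], by omega⟩, by omega⟩
  · rintro ⟨⟨d, m⟩, b⟩ h
    simp only [Finset.mem_filter, mem_bilinearReps, Finset.mem_sigma, Finset.mem_Ico,
      Nat.mem_divisorsAntidiagonal, and_true] at h ⊢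
    obtain ⟨⟨rfl, hdm⟩, hb, hbd⟩ := h
    have hm := Nat.pos_of_ne_zero (right_ne_zero_of_mul hdm)
    exact ⟨by omega, by rw [← add_mul, Nat.sub_add_cancel hbd.le]⟩
  · rintro ⟨⟨a, x⟩, b, y⟩ h
    obtain rfl : x = y := (Finset.mem_filter.1 h).2
    simp only [Nat.add_sub_cancel]
  · rintro ⟨⟨d, m⟩, b⟩ h
    simp only [Finset.mem_sigma, Finset.mem_Ico] at h
    simp only [Nat.sub_add_cancel h.2.2.le]
  · rintro ⟨⟨a, x⟩, b, y⟩ h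
    obtain rfl : x = y := (Finset.mem_filter.1 h).2
    simp only [Nat.add_sub_cancel]

lemma bilinearSum_ite_left_eq [AddCommMonoid M] (F : ℕ → ℕ → ℕ → ℕ → M) (n : ℕ) :
    bilinearSum (fun a b x y => if a = b then F a b x y else 0) n =
      divisorSum (fun d m => ∑ y ∈ Finset.Ico 1 m, F d d (m - y) y) n := by
  rw [← bilinearSum_transpose, bilinearSum_ite_right_eq fun a b x y => F x y a b,
    ← divisorSum_swap]

lemma bilinearSum_eq_of_symm_right [AddCommMonoid M] {F : ℕ → ℕ → ℕ → ℕ → M}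
    (hF : ∀ a b x y, F a b x y = F b a y x) (n : ℕ) :
    bilinearSum F n = 2 • bilinearSum (fun a b x y => if x < y then F a b x y else 0) n +
      bilinearSum (fun a b x y => if x = y then F a b x y else 0) n := by
  rw [two_nsmul]
  nth_rewrite 2 [← bilinearSum_swap]
  rw [← bilinearSum_add, ← bilinearSum_add]
  refine bilinearSum_congr n fun a b x y => ?_
  rw [← hF]
  rcases lt_trichotomy x y with h | h | h
  · simp only [h, h.not_gt, h.ne, if_true, if_false, zero_add, add_zero]
  · simp only [h, lt_irrefl, if_true, if_false, zero_add]
  · simp only [h, h.not_gt, h.ne', if_true, if_false, add_zero]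

lemma bilinearSum_eq_of_symm_left [AddCommMonoid M] {F : ℕ → ℕ → ℕ → ℕ → M}
    (hF : ∀ a b x y, F a b x y = F b a y x) (n : ℕ) :
    bilinearSum F n = 2 • bilinearSum (fun a b x y => if b < a then F a b x y else 0) n +
      bilinearSum (fun a b x y => if a = b then F a b x y else 0) n := by
  have hswap : bilinearSum (fun a b x y => if b < a then F a b x y else 0) n =
      bilinearSum (fun a b x y => if a < b then F a b x y else 0) n := by
    rw [← bilinearSum_swap]
    exact bilinearSum_congr n fun a b x y => by rw [hF]
  rw [hswap, ← bilinearSum_transpose, bilinearSum_eq_of_symm_right fun a b x y => hF x y a b,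
    ← bilinearSum_transpose fun a b x y => if x < y then F x y a b else 0,
    ← bilinearSum_transpose fun a b x y => if x = y then F x y a b else 0]

theorem bilinearSum_eq_divisorSum_of_shear_sub [AddCommGroup M] {D H : ℕ → ℕ → ℕ → ℕ → M}
    (hD : ∀ a b x y, D a b x y = D b a y x) (hH : ∀ a b x y, H a b x y = H b a y x)
    (hDH : ∀ a b x z, D a b x (x + z) = H a b x (x + z) - H (a + b) b x z) (n : ℕ) :
    bilinearSum D n = divisorSum (fun d m =>
      ∑ y ∈ Finset.Ico 1 m, H d d (m - y) y - ∑ b ∈ Finset.Ico 1 d, H d b m 0) n := by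
  have hlt : bilinearSum (fun a b x y => if x < y then D a b x y else 0) n =
      bilinearSum (fun a b x y => if x < y then H a b x y else 0) n -
        bilinearSum (fun a b x y => if b < a then H a b x y else 0) n := by
    rw [← bilinearSum_shear, ← bilinearSum_sub]
    refine bilinearSum_congr n fun a b x y => ?_
    split_ifs with hxy
    · obtain ⟨z, rfl⟩ := Nat.exists_eq_add_of_le hxy.le
      rw [hDH, Nat.add_sub_cancel_left]
    · rw [sub_zero]
  have heq : bilinearSum (fun a b x y => if x = y then D a b x y else 0) n =
      bilinearSum (fun a b x y => if x = y then H a b x y else 0) n -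
        divisorSum (fun d m => ∑ b ∈ Finset.Ico 1 d, H d b m 0) n := by
    have hdiag : divisorSum (fun d m => ∑ b ∈ Finset.Ico 1 d, H d b m 0) n =
        bilinearSum (fun a b x y => if x = y then H (a + b) b x 0 else 0) n := by
      rw [bilinearSum_ite_right_eq fun a b x _ => H (a + b) b x 0]
      refine divisorSum_congr n fun d m _ _ => Finset.sum_congr rfl fun b hb => ?_
      rw [Nat.sub_add_cancel (Finset.mem_Ico.1 hb).2.le]
    rw [hdiag, ← bilinearSum_sub]
    refine bilinearSum_congr n fun a b x y => ?_
    split_ifs with hxy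
    · subst hxy
      exact hDH a b x 0
    · rw [sub_zero]
  have hright := bilinearSum_eq_of_symm_right hH n
  rw [bilinearSum_eq_of_symm_left hH, bilinearSum_ite_left_eq] at hright
  rw [bilinearSum_eq_of_symm_right hD, hlt, heq, divisorSum_sub, eq_sub_of_add_eq' hright,
    smul_sub]
  abel

end BilinearSum

section Character

lemma χ₃_three_mul_add (k r : ℕ) : χ₃ (3 * k + r) = χ₃ r := by
  simp only [χ₃, Nat.mul_add_mod]

lemma χ₃_zero : χ₃ 0 = 0 := by simp [χ₃]

lemma χ₃_one : χ₃ 1 = 1 := by simp [χ₃]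

lemma χ₃_two : χ₃ 2 = -1 := by simp [χ₃]

lemma χ₃_eq_zero_or_one_or_neg_one (a : ℕ) : χ₃ a = 0 ∨ χ₃ a = 1 ∨ χ₃ a = -1 := by
  unfold χ₃
  split_ifs <;> simp

lemma norm_χ₃_le_one (a : ℕ) : ‖χ₃ a‖ ≤ 1 := by
  rcases χ₃_eq_zero_or_one_or_neg_one a with h | h | h <;> simp [h]

lemma χ₃_sq (a : ℕ) : χ₃ a ^ 2 = if 3 ∣ a then 0 else 1 := by
  have : a % 3 < 3 := Nat.mod_lt a (by norm_num)
  interval_cases h : a % 3 <;> simp [χ₃, Nat.dvd_iff_mod_eq_zero, h]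

lemma χ₃_mul (a b : ℕ) : χ₃ a * χ₃ b = χ₃ (a + b) ^ 2 - χ₃ (a + 2 * b) ^ 2 := by
  have : a % 3 < 3 := Nat.mod_lt a (by norm_num)
  have : b % 3 < 3 := Nat.mod_lt b (by norm_num)
  interval_cases ha : a % 3 <;> interval_cases hb : b % 3 <;>
    norm_num [χ₃, Nat.add_mod, Nat.mul_mod, ha, hb]

/-- The potential to which Liouville's method is applied: shearing it with weights related by the
parallelogram law gives a multiple of `χ₋₃(a) χ₋₃(b)`, see `residueKernel_sub_shear`. With
`δ = 1 - χ₋₃²` the indicator of `3ℤ`, it is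
`u (δ(a - b) - δ(a + b)) + v (δ(a) - δ(a + b)) + w (δ(b) - δ(a + b))`. -/
noncomputable def residueKernel (a b : ℕ) (u v w : ℂ) : ℂ :=
  u * (χ₃ a * χ₃ b) + v * (χ₃ (a + b) ^ 2 - χ₃ a ^ 2) + w * (χ₃ (a + b) ^ 2 - χ₃ b ^ 2)

lemma residueKernel_swap (a b : ℕ) (u v w : ℂ) :
    residueKernel a b u v w = residueKernel b a u w v := by
  rw [residueKernel, residueKernel, add_comm b a]
  ring

lemma residueKernel_self (a : ℕ) (u v w : ℂ) : residueKernel a a u v w = u * χ₃ a ^ 2 := by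
  have h : χ₃ (a + a) ^ 2 = χ₃ a ^ 2 := by
    have haa := χ₃_mul a a
    rw [show a + 2 * a = 3 * a + 0 by ring, χ₃_three_mul_add, χ₃_zero] at haa
    linear_combination -haa
  rw [residueKernel, h]
  ring

lemma residueKernel_zero_left (b : ℕ) (u v w : ℂ) :
    residueKernel 0 b u v w = v * χ₃ b ^ 2 := by
  rw [residueKernel, χ₃_zero, zero_add]
  ring

lemma residueKernel_zero_right (a : ℕ) (u v w : ℂ) :
    residueKernel a 0 u v w = w * χ₃ a ^ 2 := by
  rw [residueKernel_swap, residueKernel_zero_left]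

lemma residueKernel_one_two (u v w : ℂ) : residueKernel 1 2 u v w = -(u + v + w) := by
  rw [residueKernel, show 1 + 2 = 3 * 1 + 0 from rfl, χ₃_three_mul_add, χ₃_zero, χ₃_one, χ₃_two]
  ring

lemma residueKernel_two_one (u v w : ℂ) : residueKernel 2 1 u v w = -(u + v + w) := by
  rw [residueKernel_swap, residueKernel_one_two]
  ring

lemma residueKernel_three_mul_add (k r j s : ℕ) (u v w : ℂ) :
    residueKernel (3 * k + r) (3 * j + s) u v w = residueKernel r s u v w := by
  have h : 3 * k + r + (3 * j + s) = 3 * (k + j) + (r + s) := by ring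
  simp only [residueKernel, h, χ₃_three_mul_add]

-- Subtraction modulo `3` is traded for addition: `a - b ≡ a + 2 b` and `a + 3 b ≡ a`.
lemma residueKernel_sub_shear (a b : ℕ) {u t v w : ℂ} (h : u + t = 2 * (v + w)) :
    residueKernel a b u v w - residueKernel (a + b) b v t w =
      3 * ((v + w) * (χ₃ a * χ₃ b)) := by
  have hab := χ₃_mul a b
  have hshear := χ₃_mul (a + b) b
  have hperiod : χ₃ (a + b + 2 * b) = χ₃ a := by
    rw [show a + b + 2 * b = 3 * b + a by ring, χ₃_three_mul_add]
  rw [hperiod] at hshear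
  simp only [residueKernel, show a + b + b = a + 2 * b by ring] at hshear ⊢
  linear_combination (χ₃ a * χ₃ b) * h - v * hshear - (v + t + w) * hab

end Character

section BoundarySums

lemma sum_range_three_mul_add {f : ℕ → ℂ} {u v : ℂ}
    (h : ∀ j : ℕ, ∑ i ∈ Finset.range 3, f (3 * j + i) = u * j + v) (k r : ℕ) :
    ∑ b ∈ Finset.range (3 * k + r), f b =
      u * (k * (k - 1) / 2) + v * k + ∑ i ∈ Finset.range r, f (3 * k + i) := by
  rw [Finset.sum_range_add]
  congr 1
  induction k with
  | zero => simp
  | succ k ih =>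
    rw [Nat.mul_succ, Finset.sum_range_add, ih, h]
    push_cast
    ring

lemma sum_residueKernel_const (d : ℕ) (c : ℂ) :
    ∑ b ∈ Finset.range d, residueKernel d b c 0 c = χ₃ d * c := by
  obtain ⟨k, r, hr, rfl⟩ : ∃ k r, r < 3 ∧ d = 3 * k + r :=
    ⟨d / 3, d % 3, Nat.mod_lt _ (by norm_num), (Nat.div_add_mod d 3).symm⟩
  have hblock (j : ℕ) :
      ∑ i ∈ Finset.range 3, residueKernel (3 * k + r) (3 * j + i) c 0 c = 0 * j + 0 := by
    simp only [Finset.sum_range_succ, Finset.sum_range_zero, residueKernel_three_mul_add]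
    interval_cases r <;>
    · simp only [residueKernel_self, residueKernel_zero_left, residueKernel_zero_right,
        residueKernel_one_two, residueKernel_two_one, χ₃_zero, χ₃_one, χ₃_two]
      ring
  rw [sum_range_three_mul_add hblock]
  simp only [residueKernel_three_mul_add, χ₃_three_mul_add]
  interval_cases r <;>
  · simp only [Finset.sum_range_succ, Finset.sum_range_zero, residueKernel_zero_right,
      residueKernel_two_one, χ₃_zero, χ₃_one, χ₃_two]
    ring

lemma sum_residueKernel_sq (d : ℕ) :
    ∑ b ∈ Finset.range d, residueKernel d b (((d : ℂ) - b) ^ 2) ((d : ℂ) ^ 2) ((b : ℂ) ^ 2) =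
      ((2 - 3 * χ₃ d ^ 2) * (d : ℂ) ^ 3 + 3 * ((d : ℂ) ^ 2 * χ₃ d) - 2 * χ₃ d) / 3 := by
  obtain ⟨k, r, hr, rfl⟩ : ∃ k r, r < 3 ∧ d = 3 * k + r :=
    ⟨d / 3, d % 3, Nat.mod_lt _ (by norm_num), (Nat.div_add_mod d 3).symm⟩
  interval_cases r
  -- In each residue class, `u j + v` is the sum over the period `3 j, 3 j + 1, 3 j + 2`.
  on_goal 1 => rw [sum_range_three_mul_add (u := 0) (v := 18 * (k : ℂ) ^ 2)]
  on_goal 3 => rw [sum_range_three_mul_add (u := -18) (v := -9 * (k : ℂ) ^ 2 - 6)]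
  on_goal 5 => rw [sum_range_three_mul_add (u := 0) (v := -9 * (k : ℂ) ^ 2 - 18 * k - 6)]
  all_goals
    try intro j
    simp only [Finset.sum_range_succ, Finset.sum_range_zero, residueKernel_three_mul_add,
      residueKernel_self, residueKernel_zero_left, residueKernel_zero_right,
      residueKernel_one_two, residueKernel_two_one, χ₃_three_mul_add, χ₃_zero, χ₃_one, χ₃_two]
    push_cast
    ring

end BoundarySums

section Convolutions

lemma bilinearSum_χ₃_mul_χ₃_mul_sq_right (n : ℕ) :
    bilinearSum (fun a b _ y => χ₃ a * (χ₃ b * (y : ℂ) ^ 2)) n =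
      divisorSum (fun d m => (χ₃ d ^ 2 * (m : ℂ) ^ 3 - χ₃ d * (m : ℂ) ^ 2) / 6) n := by
  have hsymm : bilinearSum
      (fun a b x y => 3 * (((y : ℂ) ^ 2 + (x : ℂ) ^ 2) * (χ₃ a * χ₃ b))) n =
      6 * bilinearSum (fun a b _ y => χ₃ a * (χ₃ b * (y : ℂ) ^ 2)) n := by
    rw [show (6 : ℂ) = 3 * (2 : ℕ) by norm_num, mul_assoc, ← nsmul_eq_mul,
      two_nsmul_bilinearSum, ← bilinearSum_const_mul]
    exact bilinearSum_congr n fun a b x y => by ring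
  have hshear := bilinearSum_eq_divisorSum_of_shear_sub
    (D := fun a b x y => 3 * (((y : ℂ) ^ 2 + (x : ℂ) ^ 2) * (χ₃ a * χ₃ b)))
    (H := fun a b x y => residueKernel a b (((x + y : ℕ) : ℂ) ^ 2) ((y : ℂ) ^ 2) ((x : ℂ) ^ 2))
    (fun _ _ _ _ => by ring)
    (fun a b x y => by simp only [residueKernel_swap a b, add_comm x y])
    (fun a b x z => by
      rw [residueKernel_sub_shear a b (t := (z : ℂ) ^ 2)]
      push_cast
      ring) n
  have hedges : ∀ d m : ℕ, 0 < d → 0 < m →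
      ∑ y ∈ Finset.Ico 1 m, residueKernel d d (((m - y + y : ℕ) : ℂ) ^ 2) ((y : ℂ) ^ 2)
        (((m - y : ℕ) : ℂ) ^ 2) -
      ∑ b ∈ Finset.Ico 1 d, residueKernel d b (((m + 0 : ℕ) : ℂ) ^ 2) (((0 : ℕ) : ℂ) ^ 2)
        ((m : ℂ) ^ 2) =
      6 * ((χ₃ d ^ 2 * (m : ℂ) ^ 3 - χ₃ d * (m : ℂ) ^ 2) / 6) := by
    intro d m hd hm
    have hleft : ∑ y ∈ Finset.Ico 1 m, residueKernel d d (((m - y + y : ℕ) : ℂ) ^ 2)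
        ((y : ℂ) ^ 2) (((m - y : ℕ) : ℂ) ^ 2) = (m - 1) * ((m : ℂ) ^ 2 * χ₃ d ^ 2) := by
      rw [Finset.sum_congr rfl (g := fun _ => (m : ℂ) ^ 2 * χ₃ d ^ 2) fun y hy => by
        rw [residueKernel_self, Nat.sub_add_cancel (Finset.mem_Ico.1 hy).2.le]]
      rw [Finset.sum_const, Nat.card_Ico, nsmul_eq_mul, Nat.cast_pred hm]
    have hright := sum_residueKernel_const d ((m : ℂ) ^ 2)
    rw [Finset.sum_range_eq_add_Ico _ hd, residueKernel_zero_right] at hright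
    rw [hleft, add_zero, Nat.cast_zero, zero_pow two_ne_zero]
    linear_combination -hright
  rw [hsymm, divisorSum_congr n hedges, divisorSum_const_mul] at hshear
  exact mul_left_cancel₀ (by norm_num) hshear

lemma bilinearSum_χ₃_mul_sq_mul_χ₃ (n : ℕ) :
    bilinearSum (fun a b _ _ => χ₃ a * ((b : ℂ) ^ 2 * χ₃ b)) n =
      divisorSum (fun d _ =>
        (2 * χ₃ d - 3 * ((d : ℂ) ^ 2 * χ₃ d) - (2 - 3 * χ₃ d ^ 2) * (d : ℂ) ^ 3) / 18) n := by
  have hsymm : bilinearSum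
      (fun a b _ _ => 3 * (((a : ℂ) ^ 2 + (b : ℂ) ^ 2) * (χ₃ a * χ₃ b))) n =
      6 * bilinearSum (fun a b _ _ => χ₃ a * ((b : ℂ) ^ 2 * χ₃ b)) n := by
    rw [show (6 : ℂ) = 3 * (2 : ℕ) by norm_num, mul_assoc, ← nsmul_eq_mul,
      two_nsmul_bilinearSum, ← bilinearSum_const_mul]
    exact bilinearSum_congr n fun _ _ _ _ => by ring
  have hshear := bilinearSum_eq_divisorSum_of_shear_sub
    (D := fun a b _ _ => 3 * (((a : ℂ) ^ 2 + (b : ℂ) ^ 2) * (χ₃ a * χ₃ b)))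
    (H := fun a b _ _ => residueKernel a b (((a : ℂ) - b) ^ 2) ((a : ℂ) ^ 2) ((b : ℂ) ^ 2))
    (fun _ _ _ _ => by ring)
    (fun a b _ _ => by simp only [residueKernel_swap a b, sub_sq_comm (a : ℂ)])
    (fun a b _ _ => by
      rw [← residueKernel_sub_shear a b (u := ((a : ℂ) - b) ^ 2) (t := ((a : ℂ) + b) ^ 2)
        (by ring)]
      simp only [Nat.cast_add, add_sub_cancel_right]) n
  have hedges : ∀ d m : ℕ, 0 < d → 0 < m →
      ∑ _y ∈ Finset.Ico 1 m,
        residueKernel d d (((d : ℂ) - d) ^ 2) ((d : ℂ) ^ 2) ((d : ℂ) ^ 2) -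
      ∑ b ∈ Finset.Ico 1 d,
        residueKernel d b (((d : ℂ) - b) ^ 2) ((d : ℂ) ^ 2) ((b : ℂ) ^ 2) =
      6 * ((2 * χ₃ d - 3 * ((d : ℂ) ^ 2 * χ₃ d) - (2 - 3 * χ₃ d ^ 2) * (d : ℂ) ^ 3) / 18) := by
    intro d m hd _
    have hright := sum_residueKernel_sq d
    rw [Finset.sum_range_eq_add_Ico _ hd, residueKernel_zero_right, Nat.cast_zero] at hright
    rw [residueKernel_self, sub_self, zero_pow two_ne_zero, zero_mul, Finset.sum_const_zero]
    linear_combination -hright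
  rw [hsymm, divisorSum_congr n hedges, divisorSum_const_mul] at hshear
  exact mul_left_cancel₀ (by norm_num) hshear

end Convolutions

section LambertSeries

/-- The Lambert series `∑ φ(d, m) q ^ (d m)` over positive integers, grouped by powers of `q`. -/
noncomputable def lambertSeries (φ : ℕ → ℕ → ℂ) (q : ℂ) : ℂ :=
  ∑' n, divisorSum φ n * q ^ n

/-- Summability of the power series defining `lambertSeries φ q`. -/
def LambertSummable (φ : ℕ → ℕ → ℂ) (q : ℂ) : Prop :=
  Summable fun n => divisorSum φ n * q ^ n

variable {φ ψ : ℕ → ℕ → ℂ} {q : ℂ}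

lemma norm_divisorSum_le {k l : ℕ} (hφ : ∀ d m, ‖φ d m‖ ≤ (d : ℝ) ^ k * (m : ℝ) ^ l) (n : ℕ) :
    ‖divisorSum φ n‖ ≤ (n : ℝ) ^ (k + l + 1) :=
  calc ‖divisorSum φ n‖ ≤ ∑ _d ∈ n.divisors, (n : ℝ) ^ (k + l) := by
        refine norm_sum_le_of_le _ fun d hd => (hφ d (n / d)).trans ?_
        have hdn := Nat.divisor_le hd
        have hmn := Nat.div_le_self n d
        rw [pow_add]
        gcongr
    _ = n.divisors.card * (n : ℝ) ^ (k + l) := by rw [Finset.sum_const, nsmul_eq_mul]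
    _ ≤ n * (n : ℝ) ^ (k + l) := by
        have := Nat.card_divisors_le_self n
        gcongr
    _ = (n : ℝ) ^ (k + l + 1) := (pow_succ' _ _).symm

lemma lambertSummable_of_norm_le {k l : ℕ} (hφ : ∀ d m, ‖φ d m‖ ≤ (d : ℝ) ^ k * (m : ℝ) ^ l)
    (hq : ‖q‖ < 1) : LambertSummable φ q := by
  refine .of_norm_bounded (summable_norm_pow_mul_geometric_of_norm_lt_one (k + l + 1) hq)
    fun n => ?_
  rw [norm_mul, norm_mul, norm_pow (n : ℂ), Complex.norm_natCast]
  gcongr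
  exact norm_divisorSum_le hφ n

lemma LambertSummable.const_mul (c : ℂ) (h : LambertSummable φ q) :
    LambertSummable (fun d m => c * φ d m) q := by
  simpa only [LambertSummable, divisorSum_const_mul, mul_assoc] using Summable.mul_left c h

lemma LambertSummable.sub (hφ : LambertSummable φ q) (hψ : LambertSummable ψ q) :
    LambertSummable (fun d m => φ d m - ψ d m) q := by
  simpa only [LambertSummable, divisorSum_sub, sub_mul] using Summable.sub hφ hψ

lemma lambertSeries_const_mul (c : ℂ) (φ : ℕ → ℕ → ℂ) (q : ℂ) :
    lambertSeries (fun d m => c * φ d m) q = c * lambertSeries φ q := by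
  simp only [lambertSeries, divisorSum_const_mul, mul_assoc, tsum_mul_left]

lemma lambertSeries_sub (hφ : LambertSummable φ q) (hψ : LambertSummable ψ q) :
    lambertSeries (fun d m => φ d m - ψ d m) q = lambertSeries φ q - lambertSeries ψ q := by
  simp only [lambertSeries, divisorSum_sub, sub_mul, Summable.tsum_sub hφ hψ]

lemma lambertSeries_swap (φ : ℕ → ℕ → ℂ) (q : ℂ) :
    lambertSeries (fun d m => φ m d) q = lambertSeries φ q := by
  simp only [lambertSeries, divisorSum_swap]

lemma lambertSeries_eq_tsum_succ (φ : ℕ → ℕ → ℂ) (q : ℂ) :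
    lambertSeries φ q = ∑' n, divisorSum φ (n + 1) * q ^ (n + 1) := by
  refine ((add_left_injective 1).tsum_eq (f := fun n => divisorSum φ n * q ^ n) ?_).symm
  rintro (_ | n) hn
  · simp [divisorSum_zero] at hn
  · exact ⟨n, rfl⟩

lemma lambertSummable_ite_dvd_iff {k : ℕ} (hk : 0 < k) :
    LambertSummable (fun d m => if k ∣ d then φ (d / k) m else 0) q ↔
      LambertSummable φ (q ^ k) := by
  rw [LambertSummable, ← (mul_right_injective₀ hk.ne').summable_iff fun n hn => by
    rw [divisorSum_ite_dvd_eq_zero (mt (fun ⟨j, hj⟩ => ⟨j, hj.symm⟩) hn), zero_mul]]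
  simp only [LambertSummable, Function.comp_def, divisorSum_ite_dvd_mul hk, pow_mul]

lemma lambertSeries_ite_dvd {k : ℕ} (hk : 0 < k) (φ : ℕ → ℕ → ℂ) (q : ℂ) :
    lambertSeries (fun d m => if k ∣ d then φ (d / k) m else 0) q =
      lambertSeries φ (q ^ k) := by
  rw [lambertSeries, ← (mul_right_injective₀ hk.ne').tsum_eq
    (Function.support_subset_iff'.2 fun n hn => by
      rw [divisorSum_ite_dvd_eq_zero (mt (fun ⟨j, hj⟩ => ⟨j, hj.symm⟩) hn), zero_mul])]
  simp only [lambertSeries, divisorSum_ite_dvd_mul hk, pow_mul]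

lemma lambertSeries_mul {ω : ℕ → ℕ → ℂ} (hφ : LambertSummable φ q) (hψ : LambertSummable ψ q)
    (h : ∀ n, bilinearSum (fun a b x y => φ a x * ψ b y) n = divisorSum ω n) :
    lambertSeries φ q * lambertSeries ψ q = lambertSeries ω q := by
  refine (tsum_mul_tsum_eq_tsum_sum_antidiagonal_of_summable_norm hφ.norm hψ.norm).trans
    (tsum_congr fun n => ?_)
  rw [← h, ← sum_antidiagonal_divisorSum_mul, Finset.sum_mul]
  refine Finset.sum_congr rfl fun ij hij => ?_
  rw [← Finset.HasAntidiagonal.mem_antidiagonal.1 hij, pow_add]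
  ring

end LambertSeries

section EisensteinSeries

lemma norm_qq_lt_one {τ : ℂ} (hτ : 0 < τ.im) : ‖qq τ‖ < 1 :=
  UpperHalfPlane.norm_exp_two_pi_I_lt_one ⟨τ, hτ⟩

lemma norm_qq_pow_lt_one {τ : ℂ} (hτ : 0 < τ.im) {k : ℕ} (hk : k ≠ 0) : ‖qq τ ^ k‖ < 1 := by
  rw [norm_pow]
  exact pow_lt_one₀ (norm_nonneg _) (norm_qq_lt_one hτ) hk

lemma qq_three_mul (τ : ℂ) : qq (3 * τ) = qq τ ^ 3 := by
  rw [qq, qq, ← Complex.exp_nat_mul]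
  push_cast
  ring_nf

lemma E₄_eq_lambertSeries (τ : ℂ) :
    E₄ τ = 1 + 240 * lambertSeries (fun d _ => (d : ℂ) ^ 3) (qq τ) := by
  rw [lambertSeries_eq_tsum_succ]
  rfl

lemma E₁₃_eq_lambertSeries (τ : ℂ) :
    E₁₃ τ = 1 / 6 + lambertSeries (fun d _ => χ₃ d) (qq τ) := by
  rw [lambertSeries_eq_tsum_succ]
  rfl

lemma E₃₃₁_eq_lambertSeries (τ : ℂ) :
    E₃₃₁ τ = -(1 / 9) + lambertSeries (fun d _ => (d : ℂ) ^ 2 * χ₃ d) (qq τ) := by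
  rw [lambertSeries_eq_tsum_succ]
  rfl

lemma E₃₁₃_eq_lambertSeries (τ : ℂ) :
    E₃₁₃ τ = lambertSeries (fun d m => χ₃ d * (m : ℂ) ^ 2) (qq τ) := by
  rw [← lambertSeries_swap, lambertSeries_eq_tsum_succ]
  simp only [mul_comm (χ₃ _)]
  rfl

lemma lambertSummable_natCast_pow (k : ℕ) {q : ℂ} (hq : ‖q‖ < 1) :
    LambertSummable (fun d _ => (d : ℂ) ^ k) q :=
  lambertSummable_of_norm_le (k := k) (l := 0) (fun d m => by simp) hq

lemma lambertSummable_natCast_pow' (k : ℕ) {q : ℂ} (hq : ‖q‖ < 1) :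
    LambertSummable (fun _ m => (m : ℂ) ^ k) q :=
  lambertSummable_of_norm_le (k := 0) (l := k) (fun d m => by simp) hq

lemma lambertSummable_χ₃ {q : ℂ} (hq : ‖q‖ < 1) : LambertSummable (fun d _ => χ₃ d) q :=
  lambertSummable_of_norm_le (k := 0) (l := 0) (fun d _ => by simpa using norm_χ₃_le_one d) hq

lemma lambertSummable_sq_mul_χ₃ {q : ℂ} (hq : ‖q‖ < 1) :
    LambertSummable (fun d _ => (d : ℂ) ^ 2 * χ₃ d) q :=
  lambertSummable_of_norm_le (k := 2) (l := 0) (fun d _ => by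
    simpa using mul_le_mul_of_nonneg_left (norm_χ₃_le_one d) (sq_nonneg (d : ℝ))) hq

lemma lambertSummable_χ₃_mul_sq {q : ℂ} (hq : ‖q‖ < 1) :
    LambertSummable (fun d m => χ₃ d * (m : ℂ) ^ 2) q :=
  lambertSummable_of_norm_le (k := 0) (l := 2) (fun d m => by
    simpa using mul_le_mul_of_nonneg_right (norm_χ₃_le_one d) (sq_nonneg (m : ℝ))) hq

theorem E₁₃_mul_E₃₁₃ {τ : ℂ} (hτ : 0 < τ.im) :
    E₁₃ τ * E₃₁₃ τ = (E₄ τ - E₄ (3 * τ)) / 1440 := by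
  have hq := norm_qq_lt_one hτ
  have hq3 : ‖qq τ ^ 3‖ < 1 := norm_qq_pow_lt_one hτ three_ne_zero
  have hω : (fun d m : ℕ => (χ₃ d ^ 2 * (m : ℂ) ^ 3 - χ₃ d * (m : ℂ) ^ 2) / 6) = fun d m : ℕ =>
      1 / 6 * ((m : ℂ) ^ 3 - (if 3 ∣ d then (m : ℂ) ^ 3 else 0) - χ₃ d * (m : ℂ) ^ 2) := by
    funext d m
    rw [χ₃_sq]
    split_ifs <;> ring
  have hm3 := lambertSummable_natCast_pow' 3 hq
  have hm3_ite := (lambertSummable_ite_dvd_iff three_pos).2 (lambertSummable_natCast_pow' 3 hq3)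
  have hχ := lambertSummable_χ₃_mul_sq hq
  have hprod := lambertSeries_mul (lambertSummable_χ₃ hq) hχ bilinearSum_χ₃_mul_χ₃_mul_sq_right
  rw [hω, lambertSeries_const_mul, lambertSeries_sub (hm3.sub hm3_ite) hχ,
    lambertSeries_sub hm3 hm3_ite,
    lambertSeries_ite_dvd three_pos fun _ m => (m : ℂ) ^ 3,
    lambertSeries_swap fun d _ => (d : ℂ) ^ 3, lambertSeries_swap fun d _ => (d : ℂ) ^ 3] at hprod
  rw [E₁₃_eq_lambertSeries, E₃₁₃_eq_lambertSeries, E₄_eq_lambertSeries, E₄_eq_lambertSeries,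
    qq_three_mul]
  linear_combination hprod

theorem E₁₃_mul_E₃₃₁ {τ : ℂ} (hτ : 0 < τ.im) :
    E₁₃ τ * E₃₃₁ τ = (E₄ τ - 81 * E₄ (3 * τ)) / 4320 := by
  have hq := norm_qq_lt_one hτ
  have hq3 : ‖qq τ ^ 3‖ < 1 := norm_qq_pow_lt_one hτ three_ne_zero
  have hω : (fun d _ : ℕ => (2 * χ₃ d - 3 * ((d : ℂ) ^ 2 * χ₃ d) -
        (2 - 3 * χ₃ d ^ 2) * (d : ℂ) ^ 3) / 18) = fun d _ : ℕ =>
      1 / 18 * ((2 * χ₃ d - 3 * ((d : ℂ) ^ 2 * χ₃ d)) -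
        (81 * (if 3 ∣ d then ((d / 3 : ℕ) : ℂ) ^ 3 else 0) - (d : ℂ) ^ 3)) := by
    funext d _
    rw [χ₃_sq]
    split_ifs with hd
    · rw [Nat.cast_div hd (by norm_num)]
      push_cast
      ring
    · ring
  have hd3 := lambertSummable_natCast_pow 3 hq
  have hd3_ite := ((lambertSummable_ite_dvd_iff three_pos).2
    (lambertSummable_natCast_pow 3 hq3)).const_mul 81
  have hχ := lambertSummable_χ₃ hq
  have hχd := lambertSummable_sq_mul_χ₃ hq
  have hprod := lambertSeries_mul hχ hχd bilinearSum_χ₃_mul_sq_mul_χ₃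
  rw [hω, lambertSeries_const_mul,
    lambertSeries_sub ((hχ.const_mul 2).sub (hχd.const_mul 3)) (hd3_ite.sub hd3),
    lambertSeries_sub (hχ.const_mul 2) (hχd.const_mul 3), lambertSeries_sub hd3_ite hd3,
    lambertSeries_const_mul, lambertSeries_const_mul, lambertSeries_const_mul,
    lambertSeries_ite_dvd three_pos fun d _ => (d : ℂ) ^ 3] at hprod
  rw [E₁₃_eq_lambertSeries, E₃₃₁_eq_lambertSeries, E₄_eq_lambertSeries, E₄_eq_lambertSeries,
    qq_three_mul]
  linear_combination hprod

end EisensteinSeries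

theorem stmt13 (τ : ℂ) (hτ : 0 < τ.im) :
    E₃₄ τ = -54 * E₁₃ τ * (E₃₃₁ τ + 3 * E₃₁₃ τ) := by
  rw [E₃₄]
  linear_combination 54 * E₁₃_mul_E₃₃₁ hτ + 162 * E₁₃_mul_E₃₁₃ hτ
end

section
/- For every τ in the complex upper half plane, E_{4,2}(τ) = θ(τ)⁴ = η(2τ)²⁰/(η(τ)η(4τ))⁸. -/
open Complex

/-!
In the variable `z = 2 * τ`, each of the three functions is a form of weight `2` for the theta
group `⟨S, T²⟩`, with the same character and the value `1` at the cusp `i∞`. The difference `F` of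
two of them vanishes at `i∞`, and then so do `F ∣ T` and, to a total order of at least one in
`exp (2 * π * I * z)`, the product `F * F ∣ T * F ∣ (T * S)` over the cosets of `SL(2, ℤ)`. The
square of this product has level one, weight `12` and order at least two at `i∞`; as cusp forms of
weight `12` are multiples of the discriminant, which has order one, it is zero, and so is `F`.
-/

open Filter Topology Asymptotics ModularGroup
open UpperHalfPlane hiding I
open scoped MatrixGroups Manifold

/-- The filter of neighbourhoods of `i∞` in `ℂ`. -/
local notation "I∞" => comap Complex.im atTop

theorem ne_zero_of_im_pos {z : ℂ} (hz : 0 < z.im) : z ≠ 0 := by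
  rintro rfl
  simp at hz

theorem neg_one_div_eq_inv_neg (z : ℂ) : -1 / z = (-z)⁻¹ := by
  rw [inv_neg, neg_div, one_div]

theorem eventually_im_pos : ∀ᶠ z : ℂ in I∞, 0 < z.im :=
  tendsto_comap.eventually (eventually_gt_atTop 0)

section ThetaGroup

open scoped ModularForm

variable {k : ℤ} {F : ℍ → ℂ}

theorem eq_zero_of_slash_eq_of_isLittleO_discriminant {G : ℍ → ℂ} (hG : MDiff G)
    (hS : G ∣[(12 : ℤ)] S = G) (hT : G ∣[(12 : ℤ)] T = G)
    (h : G =o[atImInfty] ModularForm.discriminant) : G = 0 := by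
  have hinv (γ : SL(2, ℤ)) : G ∣[(12 : ℤ)] γ = G :=
    SlashInvariantForm.slash_action_generators_SL2Z hS hT γ
  have hzero : IsZeroAtImInfty G :=
    h.isBigO.trans_tendsto (CuspFormClass.zero_at_infty CuspForm.discriminant)
  let g : CuspForm 𝒮ℒ 12 :=
    { toFun := G
      slash_action_eq' := fun _ ⟨γ, hγ⟩ ↦ hγ ▸ hinv γ
      holo' := hG
      zero_at_cusps' := fun hc ↦ by
        rw [Subgroup.IsArithmetic.isCusp_iff_isCusp_SL2Z] at hc
        rw [OnePoint.isZeroAt_iff_forall_SL2Z hc]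
        exact fun γ _ ↦ (hinv γ).symm ▸ hzero }
  obtain ⟨c, hc⟩ := CuspForm.exists_smul_discriminant_of_weight_eq_twelve g
  have hcG : c • ModularForm.discriminant = G := congrArg DFunLike.coe hc
  rcases eq_or_ne c 0 with rfl | hc0
  · rw [← hcG, zero_smul]
  · rw [← hcG] at h
    have := (isLittleO_const_smul_left hc0).mp h
    exact absurd this <| isLittleO_irrefl <| Frequently.of_forall ModularForm.discriminant_ne_zero

/-- The norm of `F` from the theta group `⟨S, T²⟩` to `SL(2, ℤ)`: the product of its weight `k`
translates by the representatives `1`, `T`, `T * S` of its right cosets. -/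
noncomputable def thetaNorm (k : ℤ) (F : ℍ → ℂ) : ℍ → ℂ :=
  F * F ∣[k] T * F ∣[k] (T * S)

theorem slash_T_mul_S_mul_T (hS : F ∣[k] S = -F) (hT : F ∣[k] (T * T) = F) :
    F ∣[k] (T * S * T) = -F ∣[k] (T * S) := by
  have hS' : F ∣[k] S⁻¹ = -F := by
    rw [← neg_eq_iff_eq_neg, ← SlashAction.neg_slash, ← hS, ← SlashAction.slash_mul, mul_inv_cancel,
      SlashAction.slash_one]
  have hT' : F ∣[k] T⁻¹ = F ∣[k] T := by
    conv_lhs => rw [← hT, ← SlashAction.slash_mul, mul_inv_cancel_right]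
  rw [show T * S * T = S⁻¹ * T⁻¹ * S by decide, SlashAction.slash_mul, SlashAction.slash_mul, hS',
    SlashAction.neg_slash, hT', SlashAction.neg_slash, ← SlashAction.slash_mul]

theorem thetaNorm_slash_S (hS : F ∣[k] S = -F) :
    thetaNorm k F ∣[k + k + k] S = -thetaNorm k F := by
  have h : F ∣[k] (T * S * S) = F ∣[k] T := by
    rw [show T * S * S = S * S * T by decide]
    simp only [SlashAction.slash_mul, hS, SlashAction.neg_slash, neg_neg]
  rw [thetaNorm, ModularForm.mul_slash_SL2, ModularForm.mul_slash_SL2, hS,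
    ← SlashAction.slash_mul, ← SlashAction.slash_mul, h]
  ring

theorem thetaNorm_slash_T (hS : F ∣[k] S = -F) (hT : F ∣[k] (T * T) = F) :
    thetaNorm k F ∣[k + k + k] T = -thetaNorm k F := by
  rw [thetaNorm, ModularForm.mul_slash_SL2, ModularForm.mul_slash_SL2, ← SlashAction.slash_mul,
    ← SlashAction.slash_mul, hT, slash_T_mul_S_mul_T hS hT]
  ring

theorem slash_T_apply (F : ℍ → ℂ) (k : ℤ) (z : ℍ) : (F ∣[k] T) z = F ((1 : ℝ) +ᵥ z) := by
  rw [ModularForm.SL_slash_apply, UpperHalfPlane.modular_T_smul]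
  simp [denom]

theorem slash_T_mul_T_apply (F : ℍ → ℂ) (k : ℤ) (z : ℍ) :
    (F ∣[k] (T * T)) z = F ((2 : ℝ) +ᵥ z) := by
  rw [SlashAction.slash_mul, slash_T_apply, slash_T_apply, vadd_vadd, one_add_one_eq_two]

theorem isBigO_exp_of_slash_T_mul_T (hF : MDiff F) (hT : F ∣[k] (T * T) = F)
    (h : IsZeroAtImInfty F) :
    F =O[atImInfty] fun z ↦ Real.exp (-2 * Real.pi * z.im / 2) := by
  refine h.exp_decay_atImInfty two_pos (fun z ↦ ?_) hF h.isBoundedAtImInfty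
  by_cases hz : 0 < z.im
  · have hz' : 0 < (z + 2).im := by simpa using hz
    have := congrFun hT ⟨z, hz⟩
    rw [slash_T_mul_T_apply] at this
    simp only [Function.comp_apply, Complex.ofReal_ofNat, ofComplex_apply_of_im_pos hz,
      ofComplex_apply_of_im_pos hz']
    rw [← this]
    congr 1
    ext
    simp [add_comm]
  · have hz' : (z + 2).im ≤ 0 := by simpa using hz
    simp [ofComplex_apply_of_im_nonpos hz', ofComplex_apply_of_im_nonpos (not_lt.mp hz)]

theorem thetaNorm_isBigO_discriminant (hF : MDiff F) (hT : F ∣[k] (T * T) = F)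
    (h0 : IsZeroAtImInfty F) (h1 : IsBoundedAtImInfty (F ∣[k] (T * S))) :
    thetaNorm k F =O[atImInfty] ModularForm.discriminant := by
  have hF' := isBigO_exp_of_slash_T_mul_T hF hT h0
  have hFT : (F ∣[k] T) =O[atImInfty] fun z ↦ Real.exp (-2 * Real.pi * z.im / 2) :=
    isBigO_exp_of_slash_T_mul_T (hF.slash k _)
      (by rw [← SlashAction.slash_mul, ← mul_assoc, SlashAction.slash_mul, hT])
      (h0.slash (g := Matrix.SpecialLinearGroup.mapGL ℝ T) k (by simp [coe_T]))
  refine (((hF'.mul hFT).mul h1).congr_right fun z ↦ ?_).trans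
    ModularForm.exp_isBigO_discriminant
  rw [← Real.exp_add, Pi.one_apply, mul_one, add_halves]

theorem eq_zero_of_slash_S_eq_neg (hF : MDiff F)
    (hS : F ∣[(2 : ℤ)] S = -F) (hT : F ∣[(2 : ℤ)] (T * T) = F)
    (h0 : IsZeroAtImInfty F) (h1 : IsBoundedAtImInfty (F ∣[(2 : ℤ)] (T * S))) : F = 0 := by
  have hd (γ : SL(2, ℤ)) : MDiff (F ∣[(2 : ℤ)] γ) := hF.slash 2 _
  have hslash (γ : SL(2, ℤ)) (h : F ∣[(2 : ℤ)] γ = 0) : F = 0 := by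
    simpa [h] using SlashAction.slash_mul (2 : ℤ) γ γ⁻¹ F
  have hN : MDiff (thetaNorm 2 F) := (hF.mul (hd T)).mul (hd (T * S))
  have hO := thetaNorm_isBigO_discriminant hF hT h0 h1
  have hsmall : (thetaNorm 2 F * thetaNorm 2 F) =o[atImInfty] ModularForm.discriminant := by
    have : IsZeroAtImInfty (thetaNorm 2 F) :=
      hO.trans_tendsto (CuspFormClass.zero_at_infty CuspForm.discriminant)
    simpa using! ((isLittleO_one_iff ℂ).mpr this).mul_isBigO hO
  have h12 : (12 : ℤ) = (2 + 2 + 2) + (2 + 2 + 2) := rfl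
  have hsq : thetaNorm 2 F * thetaNorm 2 F = 0 := by
    refine eq_zero_of_slash_eq_of_isLittleO_discriminant (hN.mul hN) ?_ ?_ hsmall
    · rw [h12, ModularForm.mul_slash_SL2, thetaNorm_slash_S hS, neg_mul_neg]
    · rw [h12, ModularForm.mul_slash_SL2, thetaNorm_slash_T hS hT, neg_mul_neg]
  rcases (UpperHalfPlane.mul_eq_zero_iff (hF.mul (hd T)) (hd (T * S))).mp
    (((UpperHalfPlane.mul_eq_zero_iff hN hN).mp hsq).elim id id) with h | h
  · exact ((UpperHalfPlane.mul_eq_zero_iff hF (hd T)).mp h).elim id (hslash T)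
  · exact hslash _ h

/-- `f` behaves on the upper half plane like `θ(z / 2) ^ 4`: it is a modular form of weight `2` for
the theta group, generated by `z ↦ -1 / z` and `z ↦ z + 2`, with the character sending these to
`-1` and `1`. It takes the value `c` at the cusp `i∞` and is regular at the other cusp, `1`.
The values of `f` outside the upper half plane are arbitrary. -/
structure IsThetaForm (f : ℂ → ℂ) (c : ℂ) : Prop where
  differentiableAt {z : ℂ} (hz : 0 < z.im) : DifferentiableAt ℂ f z
  add_two {z : ℂ} (hz : 0 < z.im) : f (z + 2) = f z
  neg_one_div {z : ℂ} (hz : 0 < z.im) : f (-1 / z) = -z ^ 2 * f z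
  tendsto : Tendsto f I∞ (𝓝 c)
  isBigO_cusp_one : (fun z ↦ f (1 + -1 / z)) =O[I∞] fun z ↦ z ^ 2

namespace IsThetaForm

variable {f g : ℂ → ℂ} {c : ℂ}

theorem sub {a b : ℂ} (hf : IsThetaForm f a) (hg : IsThetaForm g b) :
    IsThetaForm (f - g) (a - b) where
  differentiableAt hz := (hf.differentiableAt hz).sub (hg.differentiableAt hz)
  add_two hz := by simp only [Pi.sub_apply, hf.add_two hz, hg.add_two hz]
  neg_one_div hz := by
    simp only [Pi.sub_apply, hf.neg_one_div hz, hg.neg_one_div hz, mul_sub]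
  tendsto := hf.tendsto.sub hg.tendsto
  isBigO_cusp_one := hf.isBigO_cusp_one.sub hg.isBigO_cusp_one

theorem slash_S_eq (hf : IsThetaForm f c) :
    (fun z : ℍ ↦ f z) ∣[(2 : ℤ)] S = -fun z : ℍ ↦ f z := by
  ext z
  rw [SlashInvariantForm.slash_S_apply, coe_mk, ← neg_one_div_eq_inv_neg, hf.neg_one_div z.im_pos]
  have := z.ne_zero
  simp only [Pi.neg_apply]
  field_simp

theorem isBoundedAtImInfty_slash_T_mul_S (hf : IsThetaForm f c) :
    IsBoundedAtImInfty ((fun z : ℍ ↦ f z) ∣[(2 : ℤ)] (T * S)) := by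
  have h1 := (hf.isBigO_cusp_one.comp_tendsto tendsto_coe_atImInfty).mul
    (isBigO_refl (fun z : ℍ ↦ (z : ℂ) ^ (-2 : ℤ)) atImInfty)
  refine (h1.congr (g₂ := 1) (fun z ↦ ?_) fun z ↦ ?_).trans (isBigO_const_const 1 one_ne_zero _)
  · simp [SlashAction.slash_mul, SlashInvariantForm.slash_S_apply, slash_T_apply,
      neg_one_div_eq_inv_neg]
  · simp [z.ne_zero]

theorem eq_zero (hf : IsThetaForm f 0) {z : ℂ} (hz : 0 < z.im) : f z = 0 := by
  have hhol : MDiff (fun z : ℍ ↦ f z) := by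
    refine UpperHalfPlane.mdifferentiable_iff.mpr <| .congr (f := f) ?_ ?_
    · exact fun z hz ↦ (hf.differentiableAt hz).differentiableWithinAt
    · exact fun z hz ↦ by simp [ofComplex_apply_of_im_pos hz]
  have hT : (fun z : ℍ ↦ f z) ∣[(2 : ℤ)] (T * T) = fun z : ℍ ↦ f z := by
    ext z
    simpa [slash_T_mul_T_apply, add_comm] using hf.add_two z.im_pos
  exact congrFun (eq_zero_of_slash_S_eq_neg hhol hf.slash_S_eq hT
    (hf.tendsto.comp tendsto_coe_atImInfty) hf.isBoundedAtImInfty_slash_T_mul_S) ⟨z, hz⟩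

theorem eq (hf : IsThetaForm f c) (hg : IsThetaForm g c) {z : ℂ}
    (hz : 0 < z.im) : f z = g z :=
  sub_eq_zero.mp <| (sub_self c ▸ hf.sub hg).eq_zero hz

end IsThetaForm

end ThetaGroup

theorem half_im_pos {z : ℂ} (hz : 0 < z.im) : 0 < (z / 2).im := by
  simpa using hz

theorem two_mul_im_pos {z : ℂ} (hz : 0 < z.im) : 0 < (2 * z).im := by
  simpa using hz

theorem neg_one_div_im_pos {z : ℂ} (hz : 0 < z.im) : 0 < (-1 / z).im := by
  rw [neg_one_div_eq_inv_neg]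
  exact UpperHalfPlane.im_inv_neg_coe_pos ⟨z, hz⟩

theorem tendsto_comap_im_of_im_eq_mul {φ : ℂ → ℂ} {a : ℝ} (ha : 0 < a)
    (hφ : ∀ z, (φ z).im = a * z.im) : Tendsto φ I∞ I∞ := by
  simpa only [tendsto_comap_iff, Function.comp_def, hφ] using tendsto_comap.const_mul_atTop ha

theorem tendsto_half : Tendsto (fun z : ℂ ↦ z / 2) I∞ I∞ :=
  tendsto_comap_im_of_im_eq_mul (a := 1 / 2) (by norm_num) fun z ↦ by
    rw [Complex.div_ofNat_im]
    ring

theorem tendsto_two_mul : Tendsto (fun z : ℂ ↦ 2 * z) I∞ I∞ :=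
  tendsto_comap_im_of_im_eq_mul two_pos fun z ↦ by simp

theorem tendsto_sub_one_half : Tendsto (fun z : ℂ ↦ (z - 1) / 2) I∞ I∞ :=
  tendsto_comap_im_of_im_eq_mul (a := 1 / 2) (by norm_num) fun z ↦ by
    rw [Complex.div_ofNat_im, Complex.sub_im, Complex.one_im]
    ring

theorem qq_eq_qParam : qq = Function.Periodic.qParam 1 := by
  ext z
  simp [qq, Function.Periodic.qParam]

theorem tendsto_qq : Tendsto qq I∞ (𝓝 0) :=
  qq_eq_qParam ▸ (Function.Periodic.qParam_tendsto one_pos).mono_right nhdsWithin_le_nhds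

theorem qq_add_one (z : ℂ) : qq (z + 1) = qq z := by
  simp [qq, mul_add, Complex.exp_add]

theorem norm_qq_le_norm_qq {w z : ℂ} (h : w.im ≤ z.im) : ‖qq z‖ ≤ ‖qq w‖ := by
  simp only [qq_eq_qParam, Function.Periodic.norm_qParam, div_one, Real.exp_le_exp]
  nlinarith [mul_nonneg Real.pi_pos.le (sub_nonneg.mpr h)]

/-! ### The Eisenstein series -/

theorem E₂_eq_E2 {z : ℂ} (hz : 0 < z.im) : E₂ z = EisensteinSeries.E2 ⟨z, hz⟩ := by
  rw [EisensteinSeries.E2_eq_tsum_cexp, E₂,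
    tsum_pnat_eq_tsum_succ (f := fun n : ℕ ↦
      (ArithmeticFunction.sigma 1 n : ℂ) * Complex.exp (2 * Real.pi * I * z) ^ n)]
  simp [sigmaC, ArithmeticFunction.sigma_apply, qq]

theorem summable_sigmaC_mul_qq_pow {z : ℂ} (hz : 0 < z.im) :
    Summable fun n : ℕ ↦ sigmaC 1 (n + 1) * qq z ^ (n + 1) := by
  refine ((summable_nat_add_iff 1).mpr
    (EisensteinSeries.summable_sigma_mul_cexp_pow (k := 2) one_le_two ⟨z, hz⟩)).congr fun n ↦ ?_
  simp [sigmaC, ArithmeticFunction.sigma_apply, qq]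

theorem tendsto_E₂ : Tendsto E₂ I∞ (𝓝 1) := by
  have hterm (n : ℕ) : Tendsto (fun z ↦ sigmaC 1 (n + 1) * qq z ^ (n + 1)) I∞ (𝓝 0) := by
    simpa using (tendsto_qq.pow (n + 1)).const_mul (sigmaC 1 (n + 1))
  have hsum : Tendsto (fun z ↦ ∑' n : ℕ, sigmaC 1 (n + 1) * qq z ^ (n + 1)) I∞ (𝓝 0) := by
    rw [← tsum_zero (β := ℕ)]
    -- For `1 ≤ im z` each term is dominated by its value at `I`.
    refine tendsto_tsum_of_dominated_convergence
      (summable_sigmaC_mul_qq_pow (z := I) (by simp)).norm hterm ?_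
    filter_upwards [tendsto_comap.eventually (eventually_ge_atTop 1)] with z hz n
    rw [norm_mul, norm_mul, norm_pow, norm_pow]
    gcongr
    exact norm_qq_le_norm_qq (by simpa using hz)
  simpa using! (hsum.const_mul 24).const_sub 1

theorem differentiableAt_E₂ {z : ℂ} (hz : 0 < z.im) : DifferentiableAt ℂ E₂ z := by
  have h := UpperHalfPlane.mdifferentiable_iff.mp E2_mdifferentiable
  refine (h.congr fun w hw ↦ ?_).differentiableAt (isOpen_upperHalfPlaneSet.mem_nhds hz)
  simp [ofComplex_apply_of_im_pos hw, E₂_eq_E2 hw]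

theorem E₂_add_one (z : ℂ) : E₂ (z + 1) = E₂ z := by
  simp only [E₂, qq_add_one]

theorem exists_E₂_neg_one_div :
    ∃ c : ℂ, ∀ z : ℂ, 0 < z.im → E₂ (-1 / z) = z ^ 2 * E₂ z + c * z := by
  refine ⟨-(1 / (2 * riemannZeta 2) * (2 * Real.pi * I)), fun z hz ↦ ?_⟩
  have h := congrFun (EisensteinSeries.E2_slash_action S) ⟨z, hz⟩
  rw [SlashInvariantForm.slash_S_apply] at h
  simp only [Pi.sub_apply, Pi.smul_apply, EisensteinSeries.D2_S, smul_eq_mul] at h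
  have hz0 := ne_zero_of_im_pos hz
  rw [E₂_eq_E2 hz, E₂_eq_E2 (neg_one_div_im_pos hz)]
  simp only [neg_one_div_eq_inv_neg]
  rw [zpow_neg, ← div_eq_mul_inv, div_eq_iff (zpow_ne_zero _ hz0)] at h
  rw [h, zpow_ofNat]
  field_simp
  ring

theorem sub_one_half_im_pos {z : ℂ} (hz : 0 < z.im) : 0 < ((z - 1) / 2).im := by
  simpa using hz

theorem neg_one_div_sub_one_half_sub_two_im_pos {z : ℂ} (hz : 0 < z.im) :
    0 < (-1 / ((z - 1) / 2) - 2).im := by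
  simpa using neg_one_div_im_pos (sub_one_half_im_pos hz)

theorem two_mul_one_add_neg_one_div {z : ℂ} (hz : z ≠ 0) :
    2 * (1 + -1 / z) = -1 / (z / 2) + 1 + 1 := by
  field_simp
  ring

-- This factors `z ↦ (1 - 1 / z) / 2` as `S * T ^ (-2) * S` after `z ↦ (z - 1) / 2`.
theorem one_add_neg_one_div_half {z : ℂ} (hz : 0 < z.im) :
    (1 + -1 / z) / 2 = -1 / (-1 / ((z - 1) / 2) - 2) := by
  have h0 := ne_zero_of_im_pos hz
  have h1 : z - 1 ≠ 0 := ne_zero_of_im_pos (by simpa)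
  rw [show -1 / ((z - 1) / 2) - 2 = -(2 * z) / (z - 1) by field_simp; ring]
  field_simp
  ring

/-- The Eisenstein series `E₄₂`, in the variable `z = 2 * τ`. -/
noncomputable def eisensteinHalf (z : ℂ) : ℂ := (4 * E₂ (2 * z) - E₂ (z / 2)) / 3

theorem differentiableAt_eisensteinHalf {z : ℂ} (hz : 0 < z.im) :
    DifferentiableAt ℂ eisensteinHalf z := by
  have h1 : DifferentiableAt ℂ (fun z ↦ E₂ (z / 2)) z :=
    (differentiableAt_E₂ (half_im_pos hz)).comp (f := fun z ↦ z / 2) z (by fun_prop)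
  have h2 : DifferentiableAt ℂ (fun z ↦ E₂ (2 * z)) z :=
    (differentiableAt_E₂ (two_mul_im_pos hz)).comp (f := fun z ↦ 2 * z) z (by fun_prop)
  exact ((h2.const_mul 4).sub h1).div_const 3

theorem eisensteinHalf_add_two (z : ℂ) : eisensteinHalf (z + 2) = eisensteinHalf z := by
  rw [eisensteinHalf, eisensteinHalf, show (z + 2) / 2 = z / 2 + 1 by ring,
    show 2 * (z + 2) = 2 * z + 1 + 1 + 1 + 1 by ring]
  simp only [E₂_add_one]

theorem eisensteinHalf_neg_one_div {z : ℂ} (hz : 0 < z.im) :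
    eisensteinHalf (-1 / z) = -z ^ 2 * eisensteinHalf z := by
  obtain ⟨c, hc⟩ := exists_E₂_neg_one_div
  rw [eisensteinHalf, eisensteinHalf, show -1 / z / 2 = -1 / (2 * z) by field_simp,
    show 2 * (-1 / z) = -1 / (z / 2) by field_simp, hc _ (half_im_pos hz),
    hc _ (two_mul_im_pos hz)]
  ring

theorem tendsto_eisensteinHalf : Tendsto eisensteinHalf I∞ (𝓝 1) := by
  have h := (((tendsto_E₂.comp tendsto_two_mul).const_mul 4).sub
    (tendsto_E₂.comp tendsto_half)).div_const 3
  rwa [show ((4 : ℂ) * 1 - 1) / 3 = 1 by norm_num] at h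

theorem eisensteinHalf_one_add_neg_one_div {z : ℂ} (hz : 0 < z.im) :
    eisensteinHalf (1 + -1 / z) = z ^ 2 * ((E₂ (z / 2) - E₂ ((z - 1) / 2)) / 3) := by
  obtain ⟨c, hc⟩ := exists_E₂_neg_one_div
  have hv := sub_one_half_im_pos hz
  have hz0 := ne_zero_of_im_pos hz
  have hz1 : z - 1 ≠ 0 := ne_zero_of_im_pos (by simpa)
  have e1 : E₂ (2 * (1 + -1 / z)) = (z / 2) ^ 2 * E₂ (z / 2) + c * (z / 2) := by
    rw [two_mul_one_add_neg_one_div hz0, E₂_add_one, E₂_add_one, hc _ (half_im_pos hz)]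
  have e2 : E₂ ((1 + -1 / z) / 2) = z ^ 2 * E₂ ((z - 1) / 2) + 2 * c * z := by
    rw [one_add_neg_one_div_half hz, hc _ (neg_one_div_sub_one_half_sub_two_im_pos hz),
      ← E₂_add_one (_ - 2), ← E₂_add_one (_ - 2 + 1),
      show -1 / ((z - 1) / 2) - 2 + 1 + 1 = -1 / ((z - 1) / 2) by ring, hc _ hv]
    field_simp
    ring
  rw [eisensteinHalf, e1, e2]
  ring

theorem isThetaForm_eisensteinHalf : IsThetaForm eisensteinHalf 1 where
  differentiableAt := differentiableAt_eisensteinHalf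
  add_two _ := eisensteinHalf_add_two _
  neg_one_div := eisensteinHalf_neg_one_div
  tendsto := tendsto_eisensteinHalf
  isBigO_cusp_one := by
    have h : (fun z ↦ (E₂ (z / 2) - E₂ ((z - 1) / 2)) / 3) =O[I∞] fun _ ↦ (1 : ℂ) :=
      (((tendsto_E₂.comp tendsto_half).sub
        (tendsto_E₂.comp tendsto_sub_one_half)).div_const 3).isBigO_one ℂ
    refine EventuallyEq.trans_isBigO ?_ (by simpa using (isBigO_refl (· ^ 2) _).mul h)
    filter_upwards [eventually_im_pos] with z hz
    exact eisensteinHalf_one_add_neg_one_div hz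

/-! ### The eta quotient -/

theorem eta_eq (z : ℂ) : η z = ModularForm.eta z := by
  simp only [η, ModularForm.eta, ModularForm.eta_q_eq_pow, qq, Function.Periodic.qParam]
  congr 2
  push_cast
  ring

theorem eta_ne_zero {z : ℂ} (hz : 0 < z.im) : η z ≠ 0 :=
  eta_eq z ▸ ModularForm.eta_ne_zero hz

theorem differentiableAt_eta {z : ℂ} (hz : 0 < z.im) : DifferentiableAt ℂ η z :=
  funext eta_eq ▸ ModularForm.differentiableAt_eta_of_mem_upperHalfPlaneSet hz

theorem eta_add_one (z : ℂ) : η (z + 1) = Complex.exp (Real.pi * I / 12) * η z := by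
  simp only [η, qq_add_one, ← mul_assoc, ← Complex.exp_add]
  congr 2
  ring

theorem eta_neg_one_div_pow_four {z : ℂ} (hz : 0 < z.im) :
    η (-1 / z) ^ 4 = -z ^ 2 * η z ^ 4 := by
  have h : ModularForm.eta (-1 / z) = _ := ModularForm.eta_comp_eq_csqrt_I_inv hz
  have hsqrt {w : ℂ} (hw : w ≠ 0) : Complex.sqrt w ^ 4 = w ^ 2 := by
    rw [_root_.sqrt_eq_exp hw, ← Complex.exp_nat_mul]
    rw [show ((4 : ℕ) : ℂ) * (Complex.log w / 2) = (2 : ℕ) * Complex.log w by push_cast; ring,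
      Complex.exp_nat_mul, Complex.exp_log hw]
  rw [eta_eq, eta_eq, h]
  simp only [Pi.smul_apply, Pi.mul_apply, smul_eq_mul, mul_pow, inv_pow, hsqrt I_ne_zero,
    hsqrt (ne_zero_of_im_pos hz), I_sq]
  ring

theorem norm_eta_add_one (z : ℂ) : ‖η (z + 1)‖ = ‖η z‖ := by
  have h : ‖Complex.exp (Real.pi * I / 12)‖ = 1 := by
    simp [Complex.norm_exp]
  rw [eta_add_one, norm_mul, h, one_mul]

theorem norm_eta_neg_one_div_pow_four {z : ℂ} (hz : 0 < z.im) :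
    ‖η (-1 / z)‖ ^ 4 = ‖z‖ ^ 2 * ‖η z‖ ^ 4 := by
  rw [← norm_pow, eta_neg_one_div_pow_four hz, norm_mul, norm_neg, norm_pow, norm_pow]

/-- Euler's product, that is, `η` without its leading factor `exp (π * I * z / 12)`. -/
noncomputable def eulerProduct (z : ℂ) : ℂ := ∏' n : ℕ, (1 - qq z ^ (n + 1))

theorem tendsto_eulerProduct : Tendsto eulerProduct I∞ (𝓝 1) := by
  have h : ContinuousAt (fun q : ℂ ↦ ∏' n : ℕ, (1 - q ^ (n + 1))) 0 :=
    (ModularForm.differentiableOn_tprod_one_sub_pow.differentiableAt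
      (Metric.isOpen_ball.mem_nhds (Metric.mem_ball_self one_pos))).continuousAt
  simpa [Function.comp_def] using! h.tendsto.comp tendsto_qq

theorem eta_pow_div_eq (z v w : ℂ) : η z ^ 20 / (η v * η w) ^ 8 =
    Complex.exp (Real.pi * I * (5 * z - 2 * (v + w)) / 3) *
      (eulerProduct z ^ 20 / (eulerProduct v * eulerProduct w) ^ 8) := by
  have h : Complex.exp (Real.pi * I * z / 12) ^ 20 =
      Complex.exp (Real.pi * I * (5 * z - 2 * (v + w)) / 3) *
        (Complex.exp (Real.pi * I * v / 12) * Complex.exp (Real.pi * I * w / 12)) ^ 8 := by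
    simp only [← Complex.exp_add, ← Complex.exp_nat_mul]
    congr 1
    push_cast
    ring
  simp only [η]
  rw [← eulerProduct, ← eulerProduct, ← eulerProduct, mul_mul_mul_comm, mul_pow _ _ 20,
    mul_pow _ _ 8, h]
  field_simp

theorem tendsto_eulerProduct_pow_div {v w : ℂ → ℂ} (hv : Tendsto v I∞ I∞)
    (hw : Tendsto w I∞ I∞) :
    Tendsto (fun z ↦ eulerProduct z ^ 20 / (eulerProduct (v z) * eulerProduct (w z)) ^ 8)
      I∞ (𝓝 1) := by
  simpa [Function.comp_def] using! (tendsto_eulerProduct.pow 20).div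
    (((tendsto_eulerProduct.comp hv).mul (tendsto_eulerProduct.comp hw)).pow 8) (by simp)

theorem norm_exp_pi_mul_I_mul_le_one {z : ℂ} (hz : 0 < z.im) :
    ‖Complex.exp (Real.pi * I * z)‖ ≤ 1 := by
  simpa [Complex.norm_exp] using (mul_pos Real.pi_pos hz).le

/-- The eta quotient of the theorem, in the variable `z = 2 * τ`. -/
noncomputable def etaQuotient (z : ℂ) : ℂ := η z ^ 20 / (η (z / 2) * η (2 * z)) ^ 8

theorem differentiableAt_etaQuotient {z : ℂ} (hz : 0 < z.im) :
    DifferentiableAt ℂ etaQuotient z := by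
  have h1 : DifferentiableAt ℂ (fun z ↦ η (z / 2)) z :=
    (differentiableAt_eta (half_im_pos hz)).comp (f := fun z ↦ z / 2) z (by fun_prop)
  have h2 : DifferentiableAt ℂ (fun z ↦ η (2 * z)) z :=
    (differentiableAt_eta (two_mul_im_pos hz)).comp (f := fun z ↦ 2 * z) z (by fun_prop)
  exact ((differentiableAt_eta hz).pow 20).div ((h1.mul h2).pow 8) (pow_ne_zero _ (mul_ne_zero
    (eta_ne_zero (half_im_pos hz)) (eta_ne_zero (two_mul_im_pos hz))))

theorem etaQuotient_add_two (z : ℂ) : etaQuotient (z + 2) = etaQuotient z := by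
  rw [etaQuotient, etaQuotient, show (z + 2) / 2 = z / 2 + 1 by ring,
    show z + 2 = z + 1 + 1 by ring, show 2 * (z + 1 + 1) = 2 * z + 1 + 1 + 1 + 1 by ring]
  simp only [eta_add_one]
  have := Complex.exp_ne_zero (Real.pi * I / 12)
  field_simp

theorem etaQuotient_neg_one_div {z : ℂ} (hz : 0 < z.im) :
    etaQuotient (-1 / z) = -z ^ 2 * etaQuotient z := by
  have hz0 := ne_zero_of_im_pos hz
  have := eta_ne_zero (half_im_pos hz)
  have := eta_ne_zero (two_mul_im_pos hz)
  rw [etaQuotient, etaQuotient, show -1 / z / 2 = -1 / (2 * z) by field_simp,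
    show 2 * (-1 / z) = -1 / (z / 2) by field_simp, mul_pow, mul_pow,
    show 20 = 4 * 5 by rfl, show 8 = 4 * 2 by rfl]
  simp only [pow_mul, eta_neg_one_div_pow_four hz, eta_neg_one_div_pow_four (half_im_pos hz),
    eta_neg_one_div_pow_four (two_mul_im_pos hz)]
  field_simp

theorem tendsto_etaQuotient : Tendsto etaQuotient I∞ (𝓝 1) := by
  refine (tendsto_eulerProduct_pow_div tendsto_half tendsto_two_mul).congr fun z ↦ ?_
  rw [etaQuotient, eta_pow_div_eq, show 5 * z - 2 * (z / 2 + 2 * z) = 0 by ring]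
  simp

theorem norm_etaQuotient_one_add_neg_one_div {z : ℂ} (hz : 0 < z.im) :
    ‖etaQuotient (1 + -1 / z)‖ =
      16 * ‖z ^ 2 * (η z ^ 20 / (η ((z - 1) / 2) * η (z / 2)) ^ 8)‖ := by
  have hv := sub_one_half_im_pos hz
  have hz0 := ne_zero_of_im_pos hz
  have hz1 : z - 1 ≠ 0 := ne_zero_of_im_pos (by simpa)
  have e0 : ‖η (1 + -1 / z)‖ ^ 4 = ‖z‖ ^ 2 * ‖η z‖ ^ 4 := by
    rw [add_comm, norm_eta_add_one, norm_eta_neg_one_div_pow_four hz]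
  have e1 : ‖η (2 * (1 + -1 / z))‖ ^ 4 = ‖z‖ ^ 2 / 4 * ‖η (z / 2)‖ ^ 4 := by
    rw [two_mul_one_add_neg_one_div hz0, norm_eta_add_one, norm_eta_add_one,
      norm_eta_neg_one_div_pow_four (half_im_pos hz), norm_div, div_pow]
    norm_num
  have e2 : ‖η ((1 + -1 / z) / 2)‖ ^ 4 = ‖z‖ ^ 2 * ‖η ((z - 1) / 2)‖ ^ 4 := by
    rw [one_add_neg_one_div_half hz,
      norm_eta_neg_one_div_pow_four (neg_one_div_sub_one_half_sub_two_im_pos hz),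
      ← norm_eta_add_one (_ - 2), ← norm_eta_add_one (_ - 2 + 1),
      show -1 / ((z - 1) / 2) - 2 + 1 + 1 = -1 / ((z - 1) / 2) by ring,
      norm_eta_neg_one_div_pow_four hv, ← mul_assoc, ← mul_pow, ← norm_mul,
      show (-1 / ((z - 1) / 2) - 2) * ((z - 1) / 2) = -z by field_simp; ring, norm_neg]
  have ha := norm_ne_zero_iff.mpr (eta_ne_zero hv)
  have hb := norm_ne_zero_iff.mpr (eta_ne_zero (half_im_pos hz))
  simp only [etaQuotient, norm_div, norm_pow, norm_mul, mul_pow]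
  rw [show 20 = 4 * 5 by rfl, show 8 = 4 * 2 by rfl]
  simp only [pow_mul, e0, e1, e2]
  have := norm_ne_zero_iff.mpr hz0
  field_simp
  norm_num

theorem isBigO_eta_pow_div :
    (fun z ↦ η z ^ 20 / (η ((z - 1) / 2) * η (z / 2)) ^ 8) =O[I∞] fun _ ↦ (1 : ℂ) := by
  have hexp : (fun z : ℂ ↦ Complex.exp (Real.pi * I * (z + 1 / 3))) =O[I∞] fun _ ↦ (1 : ℂ) := by
    refine .of_bound 1 ?_
    filter_upwards [eventually_im_pos] with z hz
    simpa using norm_exp_pi_mul_I_mul_le_one (z := z + 1 / 3) (by simpa using hz)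
  refine ((hexp.mul ((tendsto_eulerProduct_pow_div tendsto_sub_one_half
    tendsto_half).isBigO_one ℂ)).congr (fun z ↦ ?_) fun _ ↦ mul_one 1)
  rw [eta_pow_div_eq]
  congr 2
  ring

theorem isThetaForm_etaQuotient : IsThetaForm etaQuotient 1 where
  differentiableAt := differentiableAt_etaQuotient
  add_two _ := etaQuotient_add_two _
  neg_one_div := etaQuotient_neg_one_div
  tendsto := tendsto_etaQuotient
  isBigO_cusp_one := by
    refine .trans (.of_bound 16 ?_) (by simpa using (isBigO_refl (· ^ 2) _).mul isBigO_eta_pow_div)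
    filter_upwards [eventually_im_pos] with z hz
    exact (norm_etaQuotient_one_add_neg_one_div hz).le

/-! ### The theta function -/

theorem theta_eq_jacobiTheta (z : ℂ) : θ z = jacobiTheta (2 * z) := by
  rw [θ, jacobiTheta]
  refine tsum_congr fun n ↦ ?_
  rw [qq, ← Complex.exp_int_mul]
  congr 1
  push_cast
  ring

theorem neg_I_mul_cpow_half_pow_four (z : ℂ) : ((-I * z) ^ (1 / 2 : ℂ)) ^ 4 = -z ^ 2 := by
  rw [show (4 : ℕ) = 2 * 2 by rfl, pow_mul, one_div, show (2⁻¹ : ℂ) = ((2 : ℕ) : ℂ)⁻¹ by norm_num,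
    Complex.cpow_nat_inv_pow _ two_ne_zero, mul_pow, neg_sq, I_sq, neg_one_mul]

theorem jacobiTheta_neg_one_div_pow_four {z : ℂ} (hz : 0 < z.im) :
    jacobiTheta (-1 / z) ^ 4 = -z ^ 2 * jacobiTheta z ^ 4 := by
  have h := jacobiTheta_S_smul ⟨z, hz⟩
  rw [UpperHalfPlane.modular_S_smul] at h
  rw [neg_one_div_eq_inv_neg, ← neg_I_mul_cpow_half_pow_four, ← mul_pow]
  exact congrArg (· ^ 4) h

theorem tendsto_jacobiTheta : Tendsto jacobiTheta I∞ (𝓝 1) := by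
  refine tendsto_sub_nhds_zero_iff.mp
    (isBigO_at_im_infty_jacobiTheta_sub_one.trans_tendsto ?_)
  simp only [neg_mul]
  exact Real.tendsto_exp_neg_atTop_nhds_zero.comp (tendsto_comap.const_mul_atTop Real.pi_pos)

theorem jacobiTheta_one_add_eq (z : ℂ) : jacobiTheta (1 + z) = jacobiTheta₂ (1 / 2) z := by
  rw [jacobiTheta, jacobiTheta₂]
  refine tsum_congr fun n ↦ ?_
  rw [jacobiTheta₂_term, Complex.exp_eq_exp_iff_exists_int]
  obtain ⟨k, hk⟩ := Int.even_mul_pred_self n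
  refine ⟨k, ?_⟩
  have : (n : ℂ) * (n - 1) = k + k := by exact_mod_cast hk
  linear_combination Real.pi * I * this

theorem isBigO_jacobiTheta₂_half_self :
    (fun z : ℂ ↦ jacobiTheta₂ (z / 2) z) =O[I∞] fun _ ↦ (1 : ℂ) := by
  have hs := ((summable_jacobiTheta₂_term_iff (I / 2) I).mpr (by simp)).norm
  refine .of_bound (∑' n : ℤ, ‖jacobiTheta₂_term n (I / 2) I‖) ?_
  filter_upwards [tendsto_comap.eventually (eventually_ge_atTop 1)] with z hz
  rw [norm_one, mul_one]
  refine tsum_of_norm_bounded hs.hasSum fun n ↦ ?_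
  have hn : (0 : ℝ) ≤ n ^ 2 + n := by
    exact_mod_cast (by rcases le_or_gt 0 n with h | h <;> nlinarith : 0 ≤ n ^ 2 + n)
  have h2 : (z / 2).im = z.im / 2 := by simp
  have h3 : (I / 2).im = 1 / 2 := by simp
  rw [norm_jacobiTheta₂_term, norm_jacobiTheta₂_term, Real.exp_le_exp, h2, h3, Complex.I_im]
  nlinarith [mul_nonneg (mul_nonneg Real.pi_pos.le hn) (sub_nonneg.mpr hz)]

theorem jacobiTheta_one_add_neg_one_div_pow_four {z : ℂ} (hz : z ≠ 0) :
    jacobiTheta (1 + -1 / z) ^ 4 =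
      z ^ 2 * -(Complex.exp (Real.pi * I * z) * jacobiTheta₂ (z / 2) z ^ 4) := by
  have hE : Complex.exp (-Real.pi * I * (z / 2) ^ 2 / z) ^ 4 =
      (Complex.exp (Real.pi * I * z))⁻¹ := by
    rw [← Complex.exp_nat_mul, ← Complex.exp_neg]
    congr 1
    push_cast
    field_simp
    ring
  have hJ := congrArg (· ^ 4) (jacobiTheta₂_functional_equation (z / 2) z)
  simp only [mul_pow, div_pow, one_pow, neg_I_mul_cpow_half_pow_four] at hJ
  rw [← div_pow, hE, show z / 2 / z = 1 / 2 by field_simp] at hJ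
  rw [jacobiTheta_one_add_eq, hJ]
  have := Complex.exp_ne_zero (Real.pi * I * z)
  field_simp

theorem isThetaForm_jacobiTheta_pow_four : IsThetaForm (fun z ↦ jacobiTheta z ^ 4) 1 where
  differentiableAt hz := (differentiableAt_jacobiTheta hz).pow 4
  add_two _ := by simp only [add_comm _ (2 : ℂ), jacobiTheta_two_add]
  neg_one_div := jacobiTheta_neg_one_div_pow_four
  tendsto := by simpa using tendsto_jacobiTheta.pow 4
  isBigO_cusp_one := by
    have hexp : (fun z : ℂ ↦ Complex.exp (Real.pi * I * z)) =O[I∞] fun _ ↦ (1 : ℂ) := by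
      refine .of_bound 1 ?_
      filter_upwards [eventually_im_pos] with z hz
      simpa using norm_exp_pi_mul_I_mul_le_one hz
    have h := (hexp.mul (isBigO_jacobiTheta₂_half_self.pow 4)).neg_left
    refine EventuallyEq.trans_isBigO ?_
      (by simpa only [mul_one, one_pow] using (isBigO_refl (· ^ 2) _).mul h)
    filter_upwards [eventually_im_pos] with z hz
    exact jacobiTheta_one_add_neg_one_div_pow_four (ne_zero_of_im_pos hz)

theorem stmt16 (τ : ℂ) (hτ : 0 < τ.im) :
    E₄₂ τ = θ τ ^ 4 ∧ θ τ ^ 4 = η (2 * τ) ^ 20 / (η τ * η (4 * τ)) ^ 8 := by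
  have h4 : 2 * (2 * τ) = 4 * τ := by ring
  have h1 : 2 * τ / 2 = τ := by ring
  have hE : E₄₂ τ = eisensteinHalf (2 * τ) := by rw [E₄₂, eisensteinHalf, h4, h1]
  have hη : η (2 * τ) ^ 20 / (η τ * η (4 * τ)) ^ 8 = etaQuotient (2 * τ) := by
    rw [etaQuotient, h4, h1]
  rw [hE, hη, theta_eq_jacobiTheta]
  exact ⟨isThetaForm_eisensteinHalf.eq isThetaForm_jacobiTheta_pow_four (two_mul_im_pos hτ),
    isThetaForm_jacobiTheta_pow_four.eq isThetaForm_etaQuotient (two_mul_im_pos hτ)⟩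
end
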